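/- Let q be a nonzero real number. There exists a Haar measure μ on U_q(2,-2), i.e. a linear map μ : U_q(2,-2) → ℂ with μ(1) = 1 and (id ⊗ μ) ∘ α = u ∘ μ for the coaction α : U_q(2,-2) → U_q(2) ⊗ U_q(2,-2) (given by α(z_{ij}) = Σ_k x_{ik} ⊗ z_{kj}, α(τ) = t ⊗ τ), and μ is positive: μ(z*z) ≥ 0 for all z ∈ U_q(2,-2). -/

import Mathlib

open TensorProduct ComplexOrder

/-- The five generators `x11, x12, x21, x22, t` of the algebra `GL_q(2)`. -/
inductive XGen : Type
  | x11 | x12 | x21 | x22 | t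

def Xf (k : Type) [Field k] : XGen → FreeAlgebra k XGen := FreeAlgebra.ι k

/-- The defining relations of `GL_q(2)`. -/
inductive GLq2Rel (k : Type) [Field k] (q : k) :
    FreeAlgebra k XGen → FreeAlgebra k XGen → Prop
  | r1 : GLq2Rel k q (Xf k .x12 * Xf k .x11) (q • (Xf k .x11 * Xf k .x12))
  | r2 : GLq2Rel k q (Xf k .x21 * Xf k .x11) (q • (Xf k .x11 * Xf k .x21))
  | r3 : GLq2Rel k q (Xf k .x22 * Xf k .x12) (q • (Xf k .x12 * Xf k .x22))
  | r4 : GLq2Rel k q (Xf k .x22 * Xf k .x21) (q • (Xf k .x21 * Xf k .x22))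
  | r5 : GLq2Rel k q (Xf k .x12 * Xf k .x21) (Xf k .x21 * Xf k .x12)
  | r6 : GLq2Rel k q (Xf k .x11 * Xf k .x22 - Xf k .x22 * Xf k .x11)
      ((q⁻¹ - q) • (Xf k .x12 * Xf k .x21))
  | r7 : GLq2Rel k q (Xf k .x11 * Xf k .t) (Xf k .t * Xf k .x11)
  | r8 : GLq2Rel k q (Xf k .x22 * Xf k .t) (Xf k .t * Xf k .x22)
  | r9 : GLq2Rel k q (Xf k .x12 * Xf k .t) (Xf k .t * Xf k .x12)
  | r10 : GLq2Rel k q (Xf k .x21 * Xf k .t) (Xf k .t * Xf k .x21)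
  | r11 : GLq2Rel k q ((Xf k .x11 * Xf k .x22 - q⁻¹ • (Xf k .x12 * Xf k .x21)) * Xf k .t) 1

/-- The algebra `GL_q(2)`. -/
abbrev GLq2 (k : Type) [Field k] (q : k) := RingQuot (GLq2Rel k q)

/-- The five generators `z11, z12, z21, z22, τ` of the algebra `GL_q(2,-2)`. -/
inductive ZGen : Type
  | z11 | z12 | z21 | z22 | tau

def Zf (k : Type) [Field k] : ZGen → FreeAlgebra k ZGen := FreeAlgebra.ι k

/-- The defining relations of `GL_q(2,-2)`. -/
inductive GLq22Rel (k : Type) [Field k] (q : k) :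
    FreeAlgebra k ZGen → FreeAlgebra k ZGen → Prop
  | r1 : GLq22Rel k q (Zf k .z12 * Zf k .z11) (-(q • (Zf k .z11 * Zf k .z12)))
  | r2 : GLq22Rel k q (Zf k .z21 * Zf k .z11) (q • (Zf k .z11 * Zf k .z21))
  | r3 : GLq22Rel k q (Zf k .z22 * Zf k .z12) (q • (Zf k .z12 * Zf k .z22))
  | r4 : GLq22Rel k q (Zf k .z22 * Zf k .z21) (-(q • (Zf k .z21 * Zf k .z22)))
  | r5 : GLq22Rel k q (Zf k .z12 * Zf k .z21) (-(Zf k .z21 * Zf k .z12))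
  | r6 : GLq22Rel k q (Zf k .z11 * Zf k .z22 + Zf k .z22 * Zf k .z11)
      ((q - q⁻¹) • (Zf k .z12 * Zf k .z21))
  | r7 : GLq22Rel k q (Zf k .z11 * Zf k .tau) (-(Zf k .tau * Zf k .z11))
  | r8 : GLq22Rel k q (Zf k .z22 * Zf k .tau) (-(Zf k .tau * Zf k .z22))
  | r9 : GLq22Rel k q (Zf k .z12 * Zf k .tau) (-(Zf k .tau * Zf k .z12))
  | r10 : GLq22Rel k q (Zf k .z21 * Zf k .tau) (-(Zf k .tau * Zf k .z21))
  | r11 : GLq22Rel k q ((Zf k .z11 * Zf k .z22 + q⁻¹ • (Zf k .z12 * Zf k .z21)) * Zf k .tau) 1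

/-- The algebra `GL_q(2,-2)`. -/
abbrev GLq22 (k : Type) [Field k] (q : k) := RingQuot (GLq22Rel k q)

noncomputable section

/-- The generating matrix entries `x_{ij}` of `GL_q(2)`. -/
def xM (k : Type) [Field k] (q : k) : Fin 2 → Fin 2 → GLq2 k q :=
  ![![RingQuot.mkAlgHom k (GLq2Rel k q) (Xf k .x11),
     RingQuot.mkAlgHom k (GLq2Rel k q) (Xf k .x12)],
    ![RingQuot.mkAlgHom k (GLq2Rel k q) (Xf k .x21),
     RingQuot.mkAlgHom k (GLq2Rel k q) (Xf k .x22)]]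

/-- The element `t` of `GL_q(2)`. -/
def tE (k : Type) [Field k] (q : k) : GLq2 k q := RingQuot.mkAlgHom k (GLq2Rel k q) (Xf k .t)

/-- The generating matrix entries `z_{ij}` of `GL_q(2,-2)`. -/
def zM (k : Type) [Field k] (q : k) : Fin 2 → Fin 2 → GLq22 k q :=
  ![![RingQuot.mkAlgHom k (GLq22Rel k q) (Zf k .z11),
     RingQuot.mkAlgHom k (GLq22Rel k q) (Zf k .z12)],
    ![RingQuot.mkAlgHom k (GLq22Rel k q) (Zf k .z21),
     RingQuot.mkAlgHom k (GLq22Rel k q) (Zf k .z22)]]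

/-- The element `τ` of `GL_q(2,-2)`. -/
def tauE (k : Type) [Field k] (q : k) : GLq22 k q :=
  RingQuot.mkAlgHom k (GLq22Rel k q) (Zf k .tau)


/-!
Write `a = z₁₁`, `b = z₁₂` and `τ` for the generators, so that `z₂₂ τ = a*` and `q⁻¹ z₂₁ τ = b*`.
The monomials `τ ^ i b ^ m b*^ n a ^ j`, with `a ^ (-j)` read as `a*^ j`, span the algebra, and the
relations can be represented on functionals of the exponents; this produces the functional `μ`
which sends `b ^ m b*^ m` to `1 / [m + 1]`, for the `q²`-integers `[m]`, and the other monomials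
to `0`.

Invariance. A right infinitesimal action `R` (a twisted derivation) and the torus automorphisms `T`
commute with the coaction, and `μ ∘ R = 0`, `μ ∘ T = μ`. So `μ` is invariant at `1` and at every
`R z` and `T z - z`, and these elements span the algebra.

Positivity. Elements of different torus weights are orthogonal. On a weight vector
`w = τ ^ i b ^ d f(b b*) a ^ j` the product `w* w` is a polynomial in `b b*`, obtained from
`x ^ |d| |f(x)|²` by shifts `g(x) ↦ (1 - q² x) g(q² x)` or their opposites. On such polynomials
`μ` is the Jackson integral over `[0, 1]` with base `q²`, a positive combination of values at a set
of points on which the shifts preserve nonnegativity (for `q² = 1`, the Lebesgue integral).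
-/
section SkewCommutation

variable {k S : Type*} [CommRing k] [Ring S] [Algebra k S] {x y z : S} {c : k}

theorem mul_mul_of_mul_eq_smul (h : x * y = c • (y * x)) (z : S) :
    x * (y * z) = c • (y * (x * z)) := by
  rw [← mul_assoc, h, smul_mul_assoc, mul_assoc]

theorem mul_pow_of_mul_eq_smul (h : x * y = c • (y * x)) (n : ℕ) :
    x * y ^ n = c ^ n • (y ^ n * x) := by
  have h' : SemiconjBy x y (c • y) := by rw [SemiconjBy, h, smul_mul_assoc]
  rw [(h'.pow_right n).eq, smul_pow, smul_mul_assoc]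

theorem units_inv_mul_eq_neg {t : Sˣ} (h : t * x = -(x * t)) :
    (↑t⁻¹ : S) * x = -(x * ↑t⁻¹) := by
  rw [Units.inv_mul_eq_iff_eq_mul, mul_neg, ← mul_assoc, h, neg_mul, neg_neg, mul_assoc,
    Units.mul_inv, mul_one]

theorem val_units_smul_zpow (c : kˣ) (t : Sˣ) (i : ℤ) :
    (↑((c • t) ^ i) : S) = c ^ i • (↑(t ^ i) : S) := by
  set u : Sˣ := Units.map (algebraMap k S : k →* S) c
  have hu : Commute u t := Units.ext (Algebra.commutes _ _)
  have ht : c • t = u * t := Units.ext (Algebra.smul_def (c : k) _)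
  rw [ht, hu.mul_zpow, ← map_zpow, Units.val_mul]
  exact (Algebra.smul_def ((c ^ i : kˣ) : k) _).symm

variable (k) in
/-- Commutation up to an invertible scalar. -/
def SkewCommute (x y : S) : Prop := ∃ c : kˣ, x * y = c • (y * x)

namespace SkewCommute

theorem of_mul_eq_neg (h : x * y = -(y * x)) : SkewCommute k x y := ⟨-1, by simp [h]⟩

theorem symm (h : SkewCommute k x y) : SkewCommute k y x := by
  obtain ⟨c, hc⟩ := h
  exact ⟨c⁻¹, by rw [hc, inv_smul_smul]⟩

theorem mul_right (hy : SkewCommute k x y) (hz : SkewCommute k x z) :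
    SkewCommute k x (y * z) := by
  obtain ⟨c, hc⟩ := hy
  obtain ⟨d, hd⟩ := hz
  exact ⟨c * d, by rw [← mul_assoc, hc, smul_mul_assoc, mul_assoc, hd, mul_smul_comm, smul_smul,
    mul_assoc]⟩

theorem pow_right (h : SkewCommute k x y) (n : ℕ) : SkewCommute k x (y ^ n) := by
  obtain ⟨c, hc⟩ := h
  exact ⟨c ^ n, by rw [mul_pow_of_mul_eq_smul (c := (c : k)) hc, ← Units.val_pow_eq_pow_val]; rfl⟩

end SkewCommute

end SkewCommutation

/-- `x ^ n` for `n ≥ 0` and `y ^ (-n)` for `n < 0`. -/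
def signedPow {S : Type*} [Monoid S] (x y : S) : ℤ → S
  | (n : ℕ) => x ^ n
  | .negSucc n => y ^ (n + 1)

section SignedPow

variable {S : Type*}

@[simp]
theorem signedPow_natCast [Monoid S] (x y : S) (n : ℕ) : signedPow x y n = x ^ n := rfl

@[simp]
theorem signedPow_zero [Monoid S] (x y : S) : signedPow x y 0 = 1 := pow_zero x

theorem signedPow_neg [Monoid S] (x y : S) (n : ℤ) : signedPow x y (-n) = signedPow y x n := by
  rcases n with (_ | n) | n
  · simp
  · rfl
  · rfl

@[simp]
theorem signedPow_neg_natCast [Monoid S] (x y : S) (n : ℕ) : signedPow x y (-n) = y ^ n := by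
  rw [signedPow_neg, signedPow_natCast]

theorem map_signedPow {T F : Type*} [Monoid S] [Monoid T] [FunLike F S T] [MonoidHomClass F S T]
    (f : F) (x y : S) (n : ℤ) : f (signedPow x y n) = signedPow (f x) (f y) n := by
  cases n <;> exact map_pow f _ _

theorem signedPow_smul {k : Type*} [Field k] [Ring S] [Algebra k S] (c : kˣ) (x y : S) (n : ℤ) :
    signedPow (c • x) (c⁻¹ • y) n = c ^ n • signedPow x y n := by
  cases n with
  | ofNat n => simp [signedPow, smul_pow]
  | negSucc n => simp [signedPow, smul_pow]

end SignedPow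

/-- The relations in `U_q(2,-2)`, read for `p = -q`, between `z₁₁`, `z₁₂`, their adjoints
`a' = z₂₂ τ` and `b' = q⁻¹ z₂₁ τ`, and the invertible element `τ`. -/
structure TwistedGenerators {k : Type*} [Field k] (p : k) (S : Type*) [Ring S] [Algebra k S] where
  a : S
  b : S
  a' : S
  b' : S
  t : Sˣ
  b_mul_a : b * a = p • (a * b)
  b'_mul_a : b' * a = p • (a * b')
  a'_mul_b : a' * b = p • (b * a')
  a'_mul_b' : a' * b' = p • (b' * a')
  b'_mul_b : b' * b = b * b'
  a_mul_a' : a * a' = 1 - b * b'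
  a'_mul_a : a' * a = 1 - p ^ 2 • (b * b')
  t_mul_a : t * a = -(a * t)
  t_mul_b : t * b = -(b * t)
  t_mul_a' : t * a' = -(a' * t)
  t_mul_b' : t * b' = -(b' * t)

namespace TwistedGenerators

section Constructions

variable {k : Type*} [Field k] {p : k} {S : Type*} [Ring S] [Algebra k S]
  (G : TwistedGenerators p S)

/-- The rescaling of the generators by which the three-dimensional torus acts. -/
@[simps]
def scale (u v w : kˣ) : TwistedGenerators p S where
  a := u • G.a
  b := v • G.b
  a' := u⁻¹ • G.a'
  b' := v⁻¹ • G.b'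
  t := w • G.t
  b_mul_a := by simp only [smul_mul_smul_comm, G.b_mul_a, smul_comm p, mul_comm u]
  b'_mul_a := by simp only [smul_mul_smul_comm, G.b'_mul_a, smul_comm p, mul_comm u]
  a'_mul_b := by simp only [smul_mul_smul_comm, G.a'_mul_b, smul_comm p, mul_comm v]
  a'_mul_b' := by simp only [smul_mul_smul_comm, G.a'_mul_b', smul_comm p, mul_comm v⁻¹]
  b'_mul_b := by simp only [smul_mul_smul_comm, G.b'_mul_b, mul_comm v]
  a_mul_a' := by simp [smul_mul_smul_comm, G.a_mul_a']
  a'_mul_a := by simp [smul_mul_smul_comm, G.a'_mul_a]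
  t_mul_a := by simp [smul_mul_smul_comm, G.t_mul_a, mul_comm u]
  t_mul_b := by simp [smul_mul_smul_comm, G.t_mul_b, mul_comm v]
  t_mul_a' := by simp [smul_mul_smul_comm, G.t_mul_a', mul_comm u⁻¹]
  t_mul_b' := by simp [smul_mul_smul_comm, G.t_mul_b', mul_comm v⁻¹]

/-- The upper triangular generators over `S` whose upper right entries encode a twisted
derivation; it is the infinitesimal action of `a ∂/∂b - p b' ∂/∂a'`. -/
@[simps]
def triangular (hp : p ≠ 0) : TwistedGenerators p (Matrix (Fin 2) (Fin 2) S) where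
  a := !![G.a, 0; 0, p • G.a]
  b := !![G.b, G.a; 0, p⁻¹ • G.b]
  a' := !![G.a', -(p • G.b'); 0, p⁻¹ • G.a']
  b' := !![G.b', 0; 0, p • G.b']
  t :=
    { val := !![(G.t : S), 0; 0, G.t]
      inv := !![(↑G.t⁻¹ : S), 0; 0, ↑G.t⁻¹]
      val_inv := by simp [Matrix.one_fin_two]
      inv_val := by simp [Matrix.one_fin_two] }
  b_mul_a := by simp [G.b_mul_a, smul_smul, hp]
  b'_mul_a := by simp [G.b'_mul_a, smul_smul]
  a'_mul_b := by
    have entry : G.a' * G.a + -(p • G.b') * (p⁻¹ • G.b) =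
        p • (G.b * -(p • G.b') + G.a * (p⁻¹ • G.a')) := by
      simp only [neg_mul, mul_neg, smul_mul_assoc, mul_smul_comm, smul_add, smul_neg,
        smul_inv_smul₀ hp, inv_smul_smul₀ hp, G.a'_mul_a, G.b'_mul_b, G.a_mul_a']
      module
    rw [Matrix.mul_fin_two, entry]
    simp [G.a'_mul_b, smul_smul, hp]
  a'_mul_b' := by simp [G.a'_mul_b', smul_smul, hp]
  b'_mul_b := by simp [G.b'_mul_b, G.b'_mul_a, smul_smul, hp]
  a_mul_a' := by simp [G.a_mul_a', smul_smul, hp, Matrix.one_fin_two]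
  a'_mul_a := by
    simp [G.a'_mul_a, G.b'_mul_a, smul_smul, hp, Matrix.one_fin_two, pow_two, mul_assoc]
  t_mul_a := by simp [G.t_mul_a]
  t_mul_b := by simp [G.t_mul_a, G.t_mul_b]
  t_mul_a' := by simp [G.t_mul_a', G.t_mul_b']
  t_mul_b' := by simp [G.t_mul_b']

end Constructions

end TwistedGenerators

section FunctionalModel

variable {k : Type*} [Field k]

variable (k) in
/-- A linear functional on the localization of the algebra at `z₁₁`, recorded by its values on the
monomials `t ^ i * b ^ m * b' ^ n * a ^ j`. -/
abbrev MonomialFunctional := ℤ → ℕ → ℕ → ℤ → k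

/-- The action of `τ ^ e` on functionals by `(z • φ) y = φ (y * z)`. -/
@[simps]
def tauShift (e : ℤ) : Module.End k (MonomialFunctional k) where
  toFun φ i m n j := (-1) ^ (e * (m + n + j)) * φ (i + e) m n j
  map_add' φ ψ := by ext; simp [mul_add]
  map_smul' c φ := by ext; simp [mul_left_comm]

theorem tauShift_mul_tauShift_neg (e : ℤ) : tauShift (k := k) e * tauShift (-e) = 1 := by
  ext φ i m n j
  have h : ((-1 : k) ^ (e * (m + n + j))) ≠ 0 := zpow_ne_zero _ (by simp)
  simp [h]

/-- The relations are represented on functionals by `(z • φ) y = φ (y * z)`, where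
`a' = (1 - b b') a⁻¹` in the localization. -/
@[simps]
def TwistedGenerators.functional {p : k} (hp : p ≠ 0) :
    TwistedGenerators p (Module.End k (MonomialFunctional k)) where
  a :=
    { toFun φ i m n j := φ i m n (j + 1)
      map_add' _ _ := rfl
      map_smul' _ _ := rfl }
  b :=
    { toFun φ i m n j := p ^ (-j) * φ i (m + 1) n j
      map_add' φ ψ := by ext; simp [mul_add]
      map_smul' c φ := by ext; simp [mul_left_comm] }
  a' :=
    { toFun φ i m n j := φ i m n (j - 1) - p ^ (2 - 2 * j) * φ i (m + 1) (n + 1) (j - 1)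
      map_add' φ ψ := by ext; simp only [Pi.add_apply]; ring
      map_smul' c φ := by ext; simp only [Pi.smul_apply, smul_eq_mul, RingHom.id_apply]; ring }
  b' :=
    { toFun φ i m n j := p ^ (-j) * φ i m (n + 1) j
      map_add' φ ψ := by ext; simp [mul_add]
      map_smul' c φ := by ext; simp [mul_left_comm] }
  t :=
    { val := tauShift 1
      inv := tauShift (-1)
      val_inv := tauShift_mul_tauShift_neg 1
      inv_val := by simpa using tauShift_mul_tauShift_neg (k := k) (-1) }
  b_mul_a := by
    ext
    simp only [Module.End.mul_apply, LinearMap.coe_mk, AddHom.coe_mk, LinearMap.smul_apply,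
      Pi.smul_apply, smul_eq_mul, zpow_neg, zpow_add₀ hp, zpow_one]
    field_simp
  b'_mul_a := by
    ext
    simp only [Module.End.mul_apply, LinearMap.coe_mk, AddHom.coe_mk, LinearMap.smul_apply,
      Pi.smul_apply, smul_eq_mul, zpow_neg, zpow_add₀ hp, zpow_one]
    field_simp
  a'_mul_b := by
    ext
    simp only [Module.End.mul_apply, LinearMap.coe_mk, AddHom.coe_mk, LinearMap.smul_apply,
      Pi.smul_apply, smul_eq_mul, zpow_neg, zpow_sub₀ hp, zpow_one]
    field_simp
  a'_mul_b' := by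
    ext
    simp only [Module.End.mul_apply, LinearMap.coe_mk, AddHom.coe_mk, LinearMap.smul_apply,
      Pi.smul_apply, smul_eq_mul, zpow_neg, zpow_sub₀ hp, zpow_one]
    field_simp
  b'_mul_b := by ext; simp
  a_mul_a' := by
    ext
    simp only [Module.End.mul_apply, LinearMap.coe_mk, AddHom.coe_mk, LinearMap.sub_apply,
      Module.End.one_apply, Pi.sub_apply, add_sub_cancel_right, zpow_neg, zpow_sub₀ hp,
      zpow_add₀ hp, two_mul, zpow_ofNat, pow_one]
    field_simp
  a'_mul_a := by
    ext
    simp only [Module.End.mul_apply, LinearMap.coe_mk, AddHom.coe_mk, LinearMap.sub_apply,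
      Module.End.one_apply, LinearMap.smul_apply, Pi.sub_apply, Pi.smul_apply, smul_eq_mul,
      sub_add_cancel, zpow_neg, zpow_sub₀ hp, zpow_add₀ hp, two_mul, zpow_ofNat]
    field_simp
  t_mul_a := by ext; simp [zpow_add₀]
  t_mul_b := by
    have hne : (-1 : k) ≠ 0 := neg_ne_zero.2 one_ne_zero
    ext
    simp only [Module.End.mul_apply, LinearMap.coe_mk, AddHom.coe_mk, tauShift_apply,
      LinearMap.neg_apply, Pi.neg_apply, zpow_add₀ hne, one_mul, Nat.cast_succ, zpow_one]
    ring
  t_mul_a' := by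
    have hne : (-1 : k) ≠ 0 := neg_ne_zero.2 one_ne_zero
    ext
    simp only [Module.End.mul_apply, LinearMap.coe_mk, AddHom.coe_mk, tauShift_apply,
      LinearMap.neg_apply, Pi.neg_apply, zpow_sub₀ hne, zpow_add₀ hne, one_mul,
      Nat.cast_succ, zpow_one]
    ring
  t_mul_b' := by
    have hne : (-1 : k) ≠ 0 := neg_ne_zero.2 one_ne_zero
    ext
    simp only [Module.End.mul_apply, LinearMap.coe_mk, AddHom.coe_mk, tauShift_apply,
      LinearMap.neg_apply, Pi.neg_apply, zpow_add₀ hne, one_mul, Nat.cast_succ, zpow_one]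
    ring

end FunctionalModel

section Presentation

variable {k : Type} [Field k] {q : k}

/-- The elements `f x` satisfy the defining relations of `GL_q(2,-2)`. -/
def SatisfiesGLq22Rel {S : Type*} [Ring S] [Algebra k S] (q : k) (f : ZGen → S) : Prop :=
  ∀ ⦃x y⦄, GLq22Rel k q x y → FreeAlgebra.lift k f x = FreeAlgebra.lift k f y

namespace SatisfiesGLq22Rel

variable {S : Type*} [Ring S] [Algebra k S] {f : ZGen → S} (hf : SatisfiesGLq22Rel q f)

include hf

theorem z12_mul_z11 : f .z12 * f .z11 = (-q) • (f .z11 * f .z12) := by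
  simpa [Zf] using hf .r1

theorem z21_mul_z11 : f .z21 * f .z11 = q • (f .z11 * f .z21) := by
  simpa [Zf] using hf .r2

theorem z22_mul_z12 : f .z22 * f .z12 = q • (f .z12 * f .z22) := by
  simpa [Zf] using hf .r3

theorem z22_mul_z21 : f .z22 * f .z21 = (-q) • (f .z21 * f .z22) := by
  simpa [Zf] using hf .r4

theorem z21_mul_z12 : f .z21 * f .z12 = (-1 : k) • (f .z12 * f .z21) := by
  have h : f .z12 * f .z21 = -(f .z21 * f .z12) := by simpa [Zf] using hf .r5
  rw [h, neg_one_smul, neg_neg]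

theorem z22_mul_z11 :
    f .z22 * f .z11 = (q - q⁻¹) • (f .z12 * f .z21) - f .z11 * f .z22 := by
  rw [eq_sub_iff_add_eq, add_comm]
  simpa [Zf] using hf .r6

theorem tau_mul (x : ZGen) (hx : x ≠ .tau) : f .tau * f x = (-1 : k) • (f x * f .tau) := by
  suffices h : f x * f .tau = -(f .tau * f x) by rw [h, neg_one_smul, neg_neg]
  cases x with
  | z11 => simpa [Zf] using hf .r7
  | z12 => simpa [Zf] using hf .r9
  | z21 => simpa [Zf] using hf .r10
  | z22 => simpa [Zf] using hf .r8
  | tau => contradiction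

theorem det_mul_tau : (f .z11 * f .z22 + q⁻¹ • (f .z12 * f .z21)) * f .tau = 1 := by
  simpa [Zf] using hf .r11

theorem tau_mul_det : f .tau * (f .z11 * f .z22 + q⁻¹ • (f .z12 * f .z21)) = 1 := by
  have h (x y : ZGen) (hx : x ≠ .tau) (hy : y ≠ .tau) :
      f .tau * (f x * f y) = f x * f y * f .tau := by
    rw [mul_mul_of_mul_eq_smul (hf.tau_mul x hx), hf.tau_mul y hy, mul_smul_comm, smul_smul,
      mul_assoc]
    simp
  rw [mul_add, mul_smul_comm, h .z11 .z22 nofun nofun, h .z12 .z21 nofun nofun,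
    ← smul_mul_assoc, ← add_mul, hf.det_mul_tau]

end SatisfiesGLq22Rel

namespace TwistedGenerators

variable {S : Type*} [Ring S] [Algebra k S]

/-- The elements `z₁₁`, `z₁₂`, `z₂₂ τ`, `q⁻¹ z₂₁ τ`, `τ` of a solution of the relations of
`GL_q(2,-2)`. -/
def ofRel (hq : q ≠ 0) {f : ZGen → S} (hf : SatisfiesGLq22Rel q f) : TwistedGenerators (-q) S where
  a := f .z11
  b := f .z12
  a' := f .z22 * f .tau
  b' := q⁻¹ • (f .z21 * f .tau)
  t :=
    { val := f .tau
      inv := f .z11 * f .z22 + q⁻¹ • (f .z12 * f .z21)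
      val_inv := hf.tau_mul_det
      inv_val := hf.det_mul_tau }
  b_mul_a := hf.z12_mul_z11
  b'_mul_a := by
    simp only [mul_assoc, hf.tau_mul .z11 nofun, smul_mul_assoc, mul_smul_comm,
      mul_mul_of_mul_eq_smul hf.z21_mul_z11]
    module
  a'_mul_b := by
    simp only [mul_assoc, hf.tau_mul .z12 nofun, mul_smul_comm,
      mul_mul_of_mul_eq_smul hf.z22_mul_z12]
    module
  a'_mul_b' := by
    simp only [mul_assoc, mul_mul_of_mul_eq_smul (hf.tau_mul .z21 nofun),
      mul_mul_of_mul_eq_smul (hf.tau_mul .z22 nofun), smul_mul_assoc, mul_smul_comm,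
      mul_mul_of_mul_eq_smul hf.z22_mul_z21]
    module
  b'_mul_b := by
    simp only [mul_assoc, hf.tau_mul .z12 nofun, smul_mul_assoc, mul_smul_comm,
      mul_mul_of_mul_eq_smul hf.z21_mul_z12]
    module
  a_mul_a' := by
    rw [eq_sub_iff_add_eq, mul_smul_comm, ← mul_assoc, ← mul_assoc, ← smul_mul_assoc, ← add_mul,
      hf.det_mul_tau]
  a'_mul_a := by
    rw [← hf.det_mul_tau, mul_assoc, hf.tau_mul .z11 nofun, mul_smul_comm, ← mul_assoc,
      hf.z22_mul_z11]
    simp only [add_mul, sub_mul, smul_mul_assoc, mul_smul_comm, mul_assoc]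
    match_scalars
    · field_simp
      ring
    · field_simp
  t_mul_a := by simp [hf.tau_mul .z11 nofun]
  t_mul_b := by simp [hf.tau_mul .z12 nofun]
  t_mul_a' := by
    simp [mul_assoc, mul_mul_of_mul_eq_smul (hf.tau_mul .z22 nofun)]
  t_mul_b' := by
    simp [mul_assoc, mul_mul_of_mul_eq_smul (hf.tau_mul .z21 nofun)]

/-- The entries `z₁₁`, `z₁₂`, `z₂₁`, `z₂₂`, `τ` recovered from the twisted generators. -/
def entries (G : TwistedGenerators (-q) S) : ZGen → S
  | .z11 => G.a
  | .z12 => G.b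
  | .z21 => q • (G.b' * ↑G.t⁻¹)
  | .z22 => G.a' * ↑G.t⁻¹
  | .tau => G.t

/-- The matrix `z` recovered from the twisted generators. -/
def matrix (G : TwistedGenerators (-q) S) : Matrix (Fin 2) (Fin 2) S :=
  !![G.entries .z11, G.entries .z12; G.entries .z21, G.entries .z22]

theorem triangular_matrix_zero (hq : -q ≠ 0) (G : TwistedGenerators (-q) S) (i : Fin 2) :
    (G.triangular hq).matrix i 0 = !![G.matrix i 0, 0; 0, (-q) • G.matrix i 0] := by
  fin_cases i
  · rfl
  · simp [matrix, entries]

theorem triangular_matrix_one (hq : -q ≠ 0) (G : TwistedGenerators (-q) S) (i : Fin 2) :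
    (G.triangular hq).matrix i 1 = !![G.matrix i 1, G.matrix i 0; 0, (-q)⁻¹ • G.matrix i 1] := by
  fin_cases i <;> simp [matrix, entries]

theorem scale_matrix_zero (G : TwistedGenerators (-q) S) (u v : kˣ) (i : Fin 2) :
    (G.scale u v (u * v)⁻¹).matrix i 0 = u • G.matrix i 0 := by
  fin_cases i
  · rfl
  · simp [matrix, entries, smul_mul_smul_comm, smul_comm q]

theorem scale_matrix_one (G : TwistedGenerators (-q) S) (u v : kˣ) (i : Fin 2) :
    (G.scale u v (u * v)⁻¹).matrix i 1 = v • G.matrix i 1 := by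
  fin_cases i
  · rfl
  · simp [matrix, entries, smul_mul_smul_comm]

theorem satisfiesGLq22Rel_entries (hq : q ≠ 0) (G : TwistedGenerators (-q) S) :
    SatisfiesGLq22Rel q G.entries := by
  have ha : (↑G.t⁻¹ : S) * G.a = (-1 : k) • (G.a * ↑G.t⁻¹) := by
    rw [units_inv_mul_eq_neg G.t_mul_a, neg_one_smul]
  have hb : (↑G.t⁻¹ : S) * G.b = (-1 : k) • (G.b * ↑G.t⁻¹) := by
    rw [units_inv_mul_eq_neg G.t_mul_b, neg_one_smul]
  have ha' : (↑G.t⁻¹ : S) * G.a' = (-1 : k) • (G.a' * ↑G.t⁻¹) := by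
    rw [units_inv_mul_eq_neg G.t_mul_a', neg_one_smul]
  have hb' : (↑G.t⁻¹ : S) * G.b' = (-1 : k) • (G.b' * ↑G.t⁻¹) := by
    rw [units_inv_mul_eq_neg G.t_mul_b', neg_one_smul]
  have haa' (z : S) : G.a * (G.a' * z) = z - G.b * (G.b' * z) := by
    rw [← mul_assoc, G.a_mul_a', sub_mul, one_mul, mul_assoc]
  have ha'a (z : S) : G.a' * (G.a * z) = z - (-q) ^ 2 • (G.b * (G.b' * z)) := by
    rw [← mul_assoc, G.a'_mul_a, sub_mul, one_mul, smul_mul_assoc, mul_assoc]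
  have hb'b (z : S) : G.b' * (G.b * z) = G.b * (G.b' * z) := by
    rw [← mul_assoc, G.b'_mul_b, mul_assoc]
  have hta' (z : S) : G.t * (G.a' * z) = -(G.a' * (G.t * z)) := by
    rw [← mul_assoc, G.t_mul_a', neg_mul, mul_assoc]
  have htb' (z : S) : G.t * (G.b' * z) = -(G.b' * (G.t * z)) := by
    rw [← mul_assoc, G.t_mul_b', neg_mul, mul_assoc]
  intro x y h
  cases h <;> simp only [map_mul, map_smul, map_neg, map_add, map_one, Zf,
    FreeAlgebra.lift_ι_apply, entries, smul_mul_assoc, mul_smul_comm, mul_assoc, ha, hb,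
    mul_mul_of_mul_eq_smul ha', mul_mul_of_mul_eq_smul hb', G.b_mul_a,
    mul_mul_of_mul_eq_smul G.b'_mul_a, mul_mul_of_mul_eq_smul G.a'_mul_b,
    mul_mul_of_mul_eq_smul G.a'_mul_b', haa', ha'a, hb'b, G.t_mul_a, G.t_mul_b, hta', htb',
    Units.mul_inv, Units.inv_mul, mul_one]
  case r6 => match_scalars <;> field_simp <;> ring
  case r11 => rw [smul_smul, inv_mul_cancel₀ hq, one_smul, sub_add_cancel, Units.inv_mul]
  all_goals module

end TwistedGenerators

end Presentation

namespace GLq22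

variable {k : Type} [Field k] {q : k}

theorem algHom_ext {S : Type*} [Semiring S] [Algebra k S] {f g : GLq22 k q →ₐ[k] S}
    (h : ∀ i j, f (zM k q i j) = g (zM k q i j)) (hτ : f (tauE k q) = g (tauE k q)) : f = g := by
  refine RingQuot.ringQuot_ext' _ _ _ (FreeAlgebra.hom_ext (funext fun x => ?_))
  cases x
  exacts [h 0 0, h 0 1, h 1 0, h 1 1, hτ]

variable (k q) in
theorem satisfiesGLq22Rel_mk :
    SatisfiesGLq22Rel q fun x => RingQuot.mkAlgHom k (GLq22Rel k q) (Zf k x) := by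
  intro x y h
  have hlift : FreeAlgebra.lift k (fun x => RingQuot.mkAlgHom k (GLq22Rel k q) (Zf k x)) =
      RingQuot.mkAlgHom k (GLq22Rel k q) := FreeAlgebra.hom_ext (by ext; simp [Zf])
  rw [hlift]
  exact RingQuot.mkAlgHom_rel k h

variable [NeZero q]

variable (k q) in
/-- The elements `z₁₁`, `z₁₂`, `z₂₂ τ`, `q⁻¹ z₂₁ τ`, `τ` of `GL_q(2,-2)`; for the `*`-structure of
`U_q(2,-2)` the third and the fourth are the adjoints of the first and the second. -/
def gens : TwistedGenerators (-q) (GLq22 k q) :=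
  .ofRel (NeZero.ne q) (satisfiesGLq22Rel_mk k q)

theorem gens_a' : (gens k q).a' = zM k q 1 1 * tauE k q := rfl

theorem gens_b' : (gens k q).b' = q⁻¹ • (zM k q 1 0 * tauE k q) := rfl

theorem gens_t : ((gens k q).t : GLq22 k q) = tauE k q := rfl

theorem zM10_eq : zM k q 1 0 = q • ((gens k q).b' * ↑(gens k q).t⁻¹) := by
  rw [gens_b', ← gens_t, smul_mul_assoc, smul_inv_smul₀ (NeZero.ne q), Units.mul_inv_cancel_right]

theorem zM11_eq : zM k q 1 1 = (gens k q).a' * ↑(gens k q).t⁻¹ := by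
  rw [gens_a', ← gens_t, Units.mul_inv_cancel_right]

theorem matrix_gens (i j : Fin 2) : (gens k q).matrix i j = zM k q i j := by
  fin_cases i <;> fin_cases j
  exacts [rfl, rfl, zM10_eq.symm, zM11_eq.symm]

section Lift

variable {S : Type*} [Ring S] [Algebra k S] (G : TwistedGenerators (-q) S)

/-- The universal property of `GL_q(2,-2)`, in terms of the generators `gens`. -/
def lift : GLq22 k q →ₐ[k] S :=
  RingQuot.liftAlgHom k ⟨FreeAlgebra.lift k G.entries, G.satisfiesGLq22Rel_entries (NeZero.ne q)⟩

theorem lift_mk (x : ZGen) : lift G (RingQuot.mkAlgHom k (GLq22Rel k q) (Zf k x)) = G.entries x :=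
  (RingQuot.liftAlgHom_mkAlgHom_apply k _ _ _).trans (FreeAlgebra.lift_ι_apply _ _)

theorem lift_zM (i j : Fin 2) : lift G (zM k q i j) = G.matrix i j := by
  fin_cases i <;> fin_cases j
  exacts [lift_mk G .z11, lift_mk G .z12, lift_mk G .z21, lift_mk G .z22]

@[simp]
theorem lift_t : lift G (gens k q).t = G.t := lift_mk G .tau

@[simp]
theorem lift_a : lift G (gens k q).a = G.a := lift_zM G 0 0

@[simp]
theorem lift_b : lift G (gens k q).b = G.b := lift_zM G 0 1

@[simp]
theorem lift_a' : lift G (gens k q).a' = G.a' := by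
  rw [gens_a', map_mul, ← gens_t, lift_t, lift_zM]
  simp [TwistedGenerators.matrix, TwistedGenerators.entries]

@[simp]
theorem lift_b' : lift G (gens k q).b' = G.b' := by
  rw [gens_b', map_smul, map_mul, ← gens_t, lift_t, lift_zM]
  simp [TwistedGenerators.matrix, TwistedGenerators.entries, NeZero.ne q]

theorem lift_t_zpow (i : ℤ) : lift G ↑((gens k q).t ^ i) = ↑(G.t ^ i) := by
  have h : Units.map (lift G : GLq22 k q →* S) (gens k q).t = G.t := Units.ext (lift_t G)
  rw [← h, ← map_zpow]
  rfl

end Lift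

theorem induction_on {P : GLq22 k q → Prop} (z : GLq22 k q)
    (algebraMap : ∀ c, P (algebraMap k _ c)) (add : ∀ x y, P x → P y → P (x + y))
    (mul : ∀ x y, P x → P y → P (x * y)) (a : P (gens k q).a) (b : P (gens k q).b)
    (a' : P (gens k q).a') (b' : P (gens k q).b') (t : P (gens k q).t)
    (t_inv : P ↑(gens k q).t⁻¹) : P z := by
  obtain ⟨f, rfl⟩ := RingQuot.mkAlgHom_surjective k (GLq22Rel k q) z
  induction f using FreeAlgebra.induction with
  | grade0 c => rw [AlgHom.commutes]; exact algebraMap c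
  | grade1 x =>
    cases x with
    | z11 => exact a
    | z12 => exact b
    | z21 =>
      change P (zM k q 1 0)
      rw [zM10_eq, Algebra.smul_def]
      exact mul _ _ (algebraMap q) (mul _ _ b' t_inv)
    | z22 =>
      change P (zM k q 1 1)
      rw [zM11_eq]
      exact mul _ _ a' t_inv
    | tau => exact t
  | mul x y hx hy => rw [map_mul]; exact mul _ _ hx hy
  | add x y hx hy => rw [map_add]; exact add _ _ hx hy

end GLq22

namespace SkewCommute

variable {k S : Type*} [CommRing k] [Ring S] [Algebra k S] {x : S}

theorem units_zpow_right {t : Sˣ} (h : SkewCommute k x t) (i : ℤ) :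
    SkewCommute k x ↑(t ^ i) := by
  obtain ⟨c, hc⟩ := h
  have h' : SemiconjBy x t ↑(c • t) := by rw [SemiconjBy, hc, Units.val_smul, smul_mul_assoc]
  exact ⟨c ^ i, by rw [(h'.units_zpow_right i).eq, val_units_smul_zpow, smul_mul_assoc]⟩

end SkewCommute

namespace TwistedGenerators

section Monomials

variable {k : Type*} [Field k] {p : k} {S : Type*} [Ring S] [Algebra k S]
  (G : TwistedGenerators p S)

/-- The normally ordered monomials `t ^ i * b ^ m * b' ^ n * a ^ j`, where `a ^ (-j)` stands for
`a' ^ j`. -/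
def mon (i : ℤ) (m n : ℕ) (j : ℤ) : S :=
  ↑(G.t ^ i) * (G.b ^ m * G.b' ^ n * signedPow G.a G.a' j)

theorem mon_natCast (i : ℤ) (m n j : ℕ) :
    G.mon i m n j = ↑(G.t ^ i) * (G.b ^ m * G.b' ^ n * G.a ^ j) := rfl

theorem mon_neg_natCast (i : ℤ) (m n j : ℕ) :
    G.mon i m n (-j) = ↑(G.t ^ i) * (G.b ^ m * G.b' ^ n * G.a' ^ j) := by
  rw [mon, signedPow_neg_natCast]

@[simp]
theorem mon_zero : G.mon 0 0 0 0 = 1 := by simp [mon]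

theorem commute_b' : Commute G.b' G.b := G.b'_mul_b

theorem a_mul_a'_pow (j : ℕ) : G.a * G.a' ^ (j + 1) = G.a' ^ j - G.b * G.b' * G.a' ^ j := by
  rw [pow_succ', ← mul_assoc, G.a_mul_a', sub_mul, one_mul]

theorem a'_mul_a_pow (j : ℕ) : G.a' * G.a ^ (j + 1) = G.a ^ j - p ^ 2 • (G.b * G.b' * G.a ^ j) := by
  rw [pow_succ', ← mul_assoc, G.a'_mul_a, sub_mul, one_mul, smul_mul_assoc]

theorem pow_mul_pow_mul_b_mul_b' (m n : ℕ) :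
    G.b ^ m * G.b' ^ n * (G.b * G.b') = G.b ^ (m + 1) * G.b' ^ (n + 1) := by
  rw [mul_assoc, ← mul_assoc _ G.b, (G.commute_b'.pow_left n).eq, pow_succ, pow_succ]
  simp only [mul_assoc]

theorem mul_a_mul_a'_pow (i : ℤ) (m n j : ℕ) :
    ↑(G.t ^ i) * (G.b ^ m * G.b' ^ n * (G.a * G.a' ^ (j + 1))) =
      G.mon i m n (-j) - G.mon i (m + 1) (n + 1) (-j) := by
  rw [a_mul_a'_pow, mul_sub, ← mul_assoc, pow_mul_pow_mul_b_mul_b', mul_sub, mon_neg_natCast,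
    mon_neg_natCast, mul_assoc]

variable {G} in
theorem _root_.SkewCommute.mul_mon {x : S} (ht : SkewCommute k x G.t) (hb : SkewCommute k x G.b)
    (hb' : SkewCommute k x G.b') (i : ℤ) (m n : ℕ) (j : ℤ) :
    ∃ c : kˣ, x * G.mon i m n j =
      c • (↑(G.t ^ i) * (G.b ^ m * G.b' ^ n * (x * signedPow G.a G.a' j))) := by
  obtain ⟨c, hc⟩ :=
    (ht.units_zpow_right i).mul_right ((hb.pow_right m).mul_right (hb'.pow_right n))
  refine ⟨c, ?_⟩
  rw [mon, ← mul_assoc, ← mul_assoc, mul_assoc x, hc, smul_mul_assoc]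
  simp only [mul_assoc]

/-- The linear span of the normally ordered monomials. -/
def monSpan : Submodule k S :=
  Submodule.span k (Set.range fun e : ℤ × ℕ × ℕ × ℤ => G.mon e.1 e.2.1 e.2.2.1 e.2.2.2)

theorem mon_mem_monSpan (i : ℤ) (m n : ℕ) (j : ℤ) : G.mon i m n j ∈ G.monSpan :=
  Submodule.subset_span ⟨(i, m, n, j), rfl⟩

theorem mul_mem_monSpan {x z : S} (hx : ∀ i m n j, x * G.mon i m n j ∈ G.monSpan)
    (hz : z ∈ G.monSpan) : x * z ∈ G.monSpan :=
  (Submodule.span_le (p := G.monSpan.comap (LinearMap.mulLeft k x))).2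
    (by rintro _ ⟨e, rfl⟩; exact hx _ _ _ _) hz

theorem t_zpow_mul_mon (e i : ℤ) (m n : ℕ) (j : ℤ) :
    ↑(G.t ^ e) * G.mon i m n j = G.mon (e + i) m n j := by
  simp only [mon, zpow_add, Units.val_mul, mul_assoc]

theorem skewCommute_t {x : S} (h : G.t * x = -(x * G.t)) : SkewCommute k x G.t :=
  (SkewCommute.of_mul_eq_neg h).symm

theorem skewCommute_b'_b : SkewCommute k G.b' G.b := ⟨1, by rw [one_smul, G.b'_mul_b]⟩

theorem b_mul_mon_mem_monSpan (i : ℤ) (m n : ℕ) (j : ℤ) : G.b * G.mon i m n j ∈ G.monSpan := by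
  obtain ⟨c, hc⟩ := SkewCommute.mul_mon (G.skewCommute_t G.t_mul_b) ⟨1, by rw [one_smul]⟩
    G.skewCommute_b'_b.symm i m n j
  have h : G.b ^ m * G.b' ^ n * (G.b * signedPow G.a G.a' j) =
      G.b ^ (m + 1) * G.b' ^ n * signedPow G.a G.a' j := by
    rw [← mul_assoc, mul_assoc _ _ G.b, (G.commute_b'.pow_left n).eq, ← mul_assoc, ← pow_succ]
  rw [hc, h]
  exact Submodule.smul_of_tower_mem _ c (G.mon_mem_monSpan i (m + 1) n j)

theorem b'_mul_mon_mem_monSpan (i : ℤ) (m n : ℕ) (j : ℤ) : G.b' * G.mon i m n j ∈ G.monSpan := by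
  obtain ⟨c, hc⟩ := SkewCommute.mul_mon (G.skewCommute_t G.t_mul_b') G.skewCommute_b'_b
    ⟨1, by rw [one_smul]⟩ i m n j
  rw [hc, ← mul_assoc (_ * _), mul_assoc _ _ G.b', ← pow_succ]
  exact Submodule.smul_of_tower_mem _ c (G.mon_mem_monSpan i m (n + 1) j)

end Monomials

section MonomialsNeZero

variable {k : Type*} [Field k] {p : k} [NeZero p] {S : Type*} [Ring S] [Algebra k S]
  (G : TwistedGenerators p S)

theorem skewCommute_of_mul_eq_smul {x y : S} (h : x * y = p • (y * x)) : SkewCommute k x y :=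
  ⟨Units.mk0 p (NeZero.ne p), h⟩

theorem a_mul_mon_mem_monSpan (i : ℤ) (m n : ℕ) (j : ℤ) : G.a * G.mon i m n j ∈ G.monSpan := by
  obtain ⟨c, hc⟩ := SkewCommute.mul_mon (G.skewCommute_t G.t_mul_a)
    (skewCommute_of_mul_eq_smul G.b_mul_a).symm (skewCommute_of_mul_eq_smul G.b'_mul_a).symm i m n j
  rw [hc]
  refine Submodule.smul_of_tower_mem _ c ?_
  cases j with
  | ofNat j =>
    change ↑(G.t ^ i) * (G.b ^ m * G.b' ^ n * (G.a * G.a ^ j)) ∈ _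
    rw [← pow_succ']
    exact G.mon_mem_monSpan i m n (j + 1 : ℕ)
  | negSucc j =>
    change ↑(G.t ^ i) * (G.b ^ m * G.b' ^ n * (G.a * G.a' ^ (j + 1))) ∈ _
    rw [mul_a_mul_a'_pow]
    exact sub_mem (G.mon_mem_monSpan _ _ _ _) (G.mon_mem_monSpan _ _ _ _)

theorem a'_mul_mon_mem_monSpan (i : ℤ) (m n : ℕ) (j : ℤ) : G.a' * G.mon i m n j ∈ G.monSpan := by
  obtain ⟨c, hc⟩ := SkewCommute.mul_mon (G.skewCommute_t G.t_mul_a')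
    (skewCommute_of_mul_eq_smul G.a'_mul_b) (skewCommute_of_mul_eq_smul G.a'_mul_b') i m n j
  rw [hc]
  refine Submodule.smul_of_tower_mem _ c ?_
  rcases j with (_ | j) | j
  · change ↑(G.t ^ i) * (G.b ^ m * G.b' ^ n * (G.a' * G.a ^ 0)) ∈ _
    rw [pow_zero, mul_one, ← pow_one G.a']
    exact G.mon_mem_monSpan i m n (.negSucc 0)
  · change ↑(G.t ^ i) * (G.b ^ m * G.b' ^ n * (G.a' * G.a ^ (j + 1))) ∈ _
    rw [a'_mul_a_pow, mul_sub, mul_smul_comm, ← mul_assoc (_ * _), pow_mul_pow_mul_b_mul_b',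
      mul_sub, mul_smul_comm]
    exact sub_mem (G.mon_mem_monSpan i m n j)
      (Submodule.smul_mem _ _ (G.mon_mem_monSpan i (m + 1) (n + 1) j))
  · change ↑(G.t ^ i) * (G.b ^ m * G.b' ^ n * (G.a' * G.a' ^ (j + 1))) ∈ _
    rw [← pow_succ']
    exact G.mon_mem_monSpan i m n (.negSucc (j + 1))

end MonomialsNeZero

end TwistedGenerators

namespace GLq22

variable {k : Type} [Field k] {q : k} [NeZero q]

instance : NeZero (-q) := ⟨neg_ne_zero.2 (NeZero.ne q)⟩

theorem monSpan_gens : (gens k q).monSpan = ⊤ := by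
  rw [eq_top_iff]
  rintro z -
  suffices h : ∀ y ∈ (gens k q).monSpan, z * y ∈ (gens k q).monSpan by
    simpa using h 1 (by simpa using (gens k q).mon_mem_monSpan 0 0 0 0)
  have ht (e : ℤ) : ∀ y ∈ (gens k q).monSpan, ↑((gens k q).t ^ e) * y ∈ (gens k q).monSpan :=
    fun y => (gens k q).mul_mem_monSpan fun i m n j => by
      simpa only [TwistedGenerators.t_zpow_mul_mon] using (gens k q).mon_mem_monSpan _ _ _ _
  induction z using induction_on with
  | algebraMap c => exact fun y hy => by simpa [← Algebra.smul_def] using Submodule.smul_mem _ c hy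
  | add x y hx hy => exact fun z hz => by simpa [add_mul] using add_mem (hx z hz) (hy z hz)
  | mul x y hx hy => exact fun z hz => by simpa [mul_assoc] using hx _ (hy z hz)
  | a => exact fun y => (gens k q).mul_mem_monSpan (gens k q).a_mul_mon_mem_monSpan
  | b => exact fun y => (gens k q).mul_mem_monSpan (gens k q).b_mul_mon_mem_monSpan
  | a' => exact fun y => (gens k q).mul_mem_monSpan (gens k q).a'_mul_mon_mem_monSpan
  | b' => exact fun y => (gens k q).mul_mem_monSpan (gens k q).b'_mul_mon_mem_monSpan
  | t => simpa using ht 1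
  | t_inv => simpa using ht (-1)

end GLq22

section QInt

/-- The `r`-integer `[n] = 1 + r + ⋯ + r ^ (n - 1)`. -/
def qInt {k : Type*} [Semiring k] (r : k) (n : ℕ) : k := ∑ i ∈ Finset.range n, r ^ i

variable {k : Type*}

@[simp]
theorem qInt_zero [Semiring k] (r : k) : qInt r 0 = 0 := Finset.sum_range_zero _

@[simp]
theorem qInt_one_right [Semiring k] (r : k) : qInt r 1 = 1 := by simp [qInt]

theorem qInt_succ [Semiring k] (r : k) (n : ℕ) : qInt r (n + 1) = qInt r n + r ^ n :=
  Finset.sum_range_succ _ _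

theorem qInt_succ' [Semiring k] (r : k) (n : ℕ) : qInt r (n + 1) = r * qInt r n + 1 :=
  geom_sum_succ

theorem qInt_add [CommSemiring k] (r : k) (m n : ℕ) :
    qInt r (m + n) = qInt r m + r ^ m * qInt r n := by
  simp only [qInt, Finset.sum_range_add, pow_add, Finset.mul_sum]

theorem qInt_succ_pos [Semiring k] [PartialOrder k] [IsStrictOrderedRing k] {r : k} (hr : 0 ≤ r)
    (n : ℕ) : 0 < qInt r (n + 1) :=
  geom_sum_pos hr n.succ_ne_zero

theorem inv_qInt [Field k] {r : k} (hr : r ≠ 1) (n : ℕ) :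
    (qInt r n)⁻¹ = (1 - r) * (1 - r ^ n)⁻¹ := by
  rw [qInt, geom_sum_eq hr, inv_div, ← neg_div_neg_eq, neg_sub, neg_sub, div_eq_mul_inv]

theorem qInt_inv_mul_pow [Field k] {r : k} (hr : r ≠ 0) (n : ℕ) :
    qInt r⁻¹ (n + 1) * r ^ n = qInt r (n + 1) := by
  rw [qInt, qInt, Finset.sum_mul, ← Finset.sum_range_reflect]
  refine Finset.sum_congr rfl fun i hi => ?_
  obtain ⟨j, rfl⟩ := Nat.exists_eq_add_of_le (Finset.mem_range_succ_iff.1 hi)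
  rw [Nat.add_sub_cancel, Nat.add_sub_cancel_left, pow_add, inv_pow]
  field_simp

end QInt

namespace TwistedGenerators

variable {k : Type*} [Field k] {p : k} (hp : p ≠ 0) (φ : MonomialFunctional k)

theorem functional_t_zpow_apply (i : ℤ) :
    (↑((functional hp).t ^ i) : Module.End k (MonomialFunctional k)) φ 0 0 0 0 = φ i 0 0 0 := by
  have h (n : ℕ) (e : ℤ) (φ : MonomialFunctional k) :
      ((tauShift e) ^ n) φ 0 0 0 0 = φ (n * e) 0 0 0 := by
    induction n generalizing φ with
    | zero => simp
    | succ n ih => rw [pow_succ, Module.End.mul_apply, ih]; simp [add_mul]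
  rcases i with n | n
  · simpa using h n 1 φ
  · have := h (n + 1) (-1) φ
    rwa [show ((n + 1 : ℕ) : ℤ) * -1 = .negSucc n by lia] at this

theorem functional_b_pow_apply (m : ℕ) (i : ℤ) (l n : ℕ) :
    ((functional hp).b ^ m) φ i l n 0 = φ i (l + m) n 0 := by
  induction m generalizing φ with
  | zero => simp
  | succ m ih => rw [pow_succ, Module.End.mul_apply, ih]; simp [add_assoc]

theorem functional_b'_pow_apply (n : ℕ) (i : ℤ) (m l : ℕ) :
    ((functional hp).b' ^ n) φ i m l 0 = φ i m (l + n) 0 := by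
  induction n generalizing φ with
  | zero => simp
  | succ n ih => rw [pow_succ, Module.End.mul_apply, ih]; simp [add_assoc]

theorem functional_a_pow_apply (j : ℕ) (i : ℤ) (m n : ℕ) (l : ℤ) :
    ((functional hp).a ^ j) φ i m n l = φ i m n (l + j) := by
  induction j generalizing φ with
  | zero => simp
  | succ j ih => rw [pow_succ, Module.End.mul_apply, ih]; simp [add_assoc]

theorem functional_a'_pow_apply_eq_zero {φ : MonomialFunctional k}
    (hφ : ∀ i m n, ∀ l < 0, φ i m n l = 0) (j : ℕ) (i : ℤ) (m n : ℕ) {l : ℤ} (hl : l < j) :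
    ((functional hp).a' ^ j) φ i m n l = 0 := by
  induction j generalizing m n l with
  | zero => exact hφ i m n l (by simpa using hl)
  | succ j ih =>
    have hl' : l - 1 < j := by lia
    simp [pow_succ', ih _ _ hl']

theorem functional_mon_apply {φ : MonomialFunctional k} (hφ : ∀ i m n, ∀ l < 0, φ i m n l = 0)
    (i : ℤ) (m n : ℕ) (j : ℤ) :
    (functional hp).mon i m n j φ 0 0 0 0 = φ i m n j := by
  simp only [mon, Module.End.mul_apply, functional_t_zpow_apply, functional_b_pow_apply,
    functional_b'_pow_apply, zero_add]
  rcases j with j | j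
  · simpa using functional_a_pow_apply hp φ j i m n 0
  · rw [hφ i m n _ (Int.negSucc_lt_zero j)]
    exact functional_a'_pow_apply_eq_zero hp hφ (j + 1) i m n (by lia)

end TwistedGenerators

namespace GLq22

variable {k : Type} [Field k] {q : k} [NeZero q]

theorem lift_mon {S : Type*} [Ring S] [Algebra k S] (G : TwistedGenerators (-q) S) (i : ℤ)
    (m n : ℕ) (j : ℤ) : lift G ((gens k q).mon i m n j) = G.mon i m n j := by
  simp only [TwistedGenerators.mon, map_mul, map_pow, map_signedPow, lift_t_zpow, lift_a,
    lift_b, lift_a', lift_b']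

variable (k q) in
/-- The functional whose nonzero values are `b ^ m * b' ^ m ↦ 1 / [m + 1]`. -/
def haarFunctional : MonomialFunctional k := fun i m n j =>
  if i = 0 ∧ m = n ∧ j = 0 then (qInt (q ^ 2) (m + 1))⁻¹ else 0

variable (k q) in
/-- The Haar measure of `U_q(2,-2)`. -/
def haar : GLq22 k q →ₗ[k] k where
  toFun z := lift (.functional (neg_ne_zero.2 (NeZero.ne q))) z (haarFunctional k q) 0 0 0 0
  map_add' x y := by rw [map_add]; rfl
  map_smul' c x := by rw [map_smul]; rfl

theorem haar_mon (i : ℤ) (m n : ℕ) (j : ℤ) : haar k q ((gens k q).mon i m n j) =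
    if i = 0 ∧ m = n ∧ j = 0 then (qInt (q ^ 2) (m + 1))⁻¹ else 0 := by
  rw [haar, LinearMap.coe_mk, AddHom.coe_mk, lift_mon, TwistedGenerators.functional_mon_apply]
  · rfl
  · exact fun i m n l hl => if_neg fun h => hl.ne h.2.2

@[simp]
theorem haar_one : haar k q 1 = 1 := by
  rw [← (gens k q).mon_zero, haar_mon]
  simp

theorem linearMap_ext {M : Type*} [AddCommMonoid M] [Module k M] {f g : GLq22 k q →ₗ[k] M}
    (h : ∀ i m n j, f ((gens k q).mon i m n j) = g ((gens k q).mon i m n j)) : f = g :=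
  LinearMap.ext_on_range monSpan_gens fun _ => h _ _ _ _

end GLq22

section TriangularMonomials

namespace TwistedGenerators

variable {k : Type*} [Field k] {p : k} (hp : p ≠ 0) {S : Type*} [Ring S] [Algebra k S]
  (G : TwistedGenerators p S)

theorem triangular_t_zpow (i : ℤ) : (↑((G.triangular hp).t ^ i) : Matrix (Fin 2) (Fin 2) S) =
    !![(↑(G.t ^ i) : S), 0; 0, ↑(G.t ^ i)] := by
  have h (x : S) : Matrix.scalar (Fin 2) x = !![x, 0; 0, x] := by
    ext r s; fin_cases r <;> fin_cases s <;> rfl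
  have ht : (G.triangular hp).t = Units.map (Matrix.scalar (Fin 2)).toMonoidHom G.t :=
    Units.ext (h _).symm
  rw [ht, ← map_zpow]
  exact h _

theorem diagonal_pow (x y : S) (n : ℕ) : !![x, 0; 0, y] ^ n = !![x ^ n, 0; 0, y ^ n] := by
  induction n with
  | zero => simp [Matrix.one_fin_two]
  | succ n ih => simp [pow_succ, ih]

include hp in
theorem a_mul_b : G.a * G.b = p⁻¹ • (G.b * G.a) := by rw [G.b_mul_a, inv_smul_smul₀ hp]

include hp in
theorem a_mul_b'_pow (n : ℕ) : G.a * G.b' ^ n = p⁻¹ ^ n • (G.b' ^ n * G.a) :=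
  mul_pow_of_mul_eq_smul (by rw [G.b'_mul_a, inv_smul_smul₀ hp]) n

theorem triangular_b_pow (m : ℕ) : (G.triangular hp).b ^ m =
    !![G.b ^ m, (qInt (p ^ 2) m * p ^ 2 / p ^ (2 * m)) • (G.b ^ (m - 1) * G.a);
      0, (p⁻¹ • G.b) ^ m] := by
  induction m with
  | zero => simp [Matrix.one_fin_two]
  | succ m ih =>
    have entry : G.b ^ m * G.a + (qInt (p ^ 2) m * p ^ 2 / p ^ (2 * m)) • (G.b ^ (m - 1) * G.a) *
          (p⁻¹ • G.b) =
        (qInt (p ^ 2) (m + 1) * p ^ 2 / p ^ (2 * (m + 1))) • (G.b ^ m * G.a) := by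
      rcases m with _ | m
      · simp [hp]
      · rw [smul_mul_smul_comm, mul_assoc, G.a_mul_b hp, mul_smul_comm, Nat.add_sub_cancel,
          ← mul_assoc, ← pow_succ, qInt_succ _ (m + 1)]
        match_scalars
        field_simp
        ring
    rw [pow_succ, ih, triangular_b, Matrix.mul_fin_two, Nat.add_sub_cancel, ← entry]
    simp only [pow_succ, mul_zero, zero_mul, add_zero, zero_add]

theorem triangular_a'_pow_succ (j : ℕ) : (G.triangular hp).a' ^ (j + 1) =
    !![G.a' ^ (j + 1), (-(p * qInt (p ^ 2) (j + 1) / p ^ j)) • (G.b' * G.a' ^ j);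
      0, (p⁻¹ • G.a') ^ (j + 1)] := by
  induction j with
  | zero => simp
  | succ j ih =>
    have entry : G.a' * (-(p * qInt (p ^ 2) (j + 1) / p ^ j)) • (G.b' * G.a' ^ j) +
          -(p • G.b') * (p⁻¹ • G.a') ^ (j + 1) =
        (-(p * qInt (p ^ 2) (j + 1 + 1) / p ^ (j + 1))) • (G.b' * G.a' ^ (j + 1)) := by
      rw [mul_smul_comm, ← mul_assoc, G.a'_mul_b', smul_mul_assoc, mul_assoc, ← pow_succ',
        smul_pow, neg_mul, smul_mul_smul_comm, inv_pow, qInt_succ' _ (j + 1)]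
      match_scalars
      field_simp
      ring
    rw [pow_succ', ih, triangular_a', Matrix.mul_fin_two, entry]
    simp only [pow_succ', mul_zero, zero_mul, add_zero, zero_add]

include hp in
theorem b_pow_mul_a_mul_b'_pow (m n : ℕ) (x : S) :
    G.b ^ m * G.a * (p • G.b') ^ n * x = G.b ^ m * G.b' ^ n * (G.a * x) := by
  rw [smul_pow, mul_assoc (_ ^ m), mul_smul_comm, G.a_mul_b'_pow hp, smul_smul, ← mul_pow,
    mul_inv_cancel₀ hp, one_pow, one_smul]
  simp only [mul_assoc]

theorem triangular_mon_natCast (i : ℤ) (m n j : ℕ) : (G.triangular hp).mon i m n j 0 1 =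
    (p ^ j * (qInt (p ^ 2) m * p ^ 2 / p ^ (2 * m))) • G.mon i (m - 1) n (j + 1 : ℕ) := by
  rw [mon_natCast, mon_natCast, triangular_t_zpow, triangular_b_pow, triangular_a, triangular_b',
    diagonal_pow, diagonal_pow]
  simp only [Matrix.mul_fin_two, Matrix.of_apply, Matrix.cons_val, smul_zero, mul_zero, zero_mul,
    add_zero, zero_add, smul_mul_assoc, G.b_pow_mul_a_mul_b'_pow hp, smul_pow p G.a,
    mul_smul_comm, ← pow_succ', smul_smul]

theorem triangular_mon_neg_succ (i : ℤ) (m n j : ℕ) :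
    (G.triangular hp).mon i m n (-(j + 1 : ℕ)) 0 1 = (p / p ^ (2 * m + j)) •
      (qInt (p ^ 2) m • G.mon i (m - 1) n (-j) -
        qInt (p ^ 2) (m + (j + 1)) • G.mon i m (n + 1) (-j)) := by
  have hb' : G.b ^ m * G.b' ^ n * (G.b' * G.a' ^ j) = G.b ^ m * G.b' ^ (n + 1) * G.a' ^ j := by
    rw [← mul_assoc, mul_assoc (_ ^ m), ← pow_succ]
  have ha (m : ℕ) : ↑(G.t ^ i) * (G.b ^ m * G.b' ^ n * (G.a * G.a' ^ (j + 1))) =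
      G.mon i m n (-j) - G.mon i (m + 1) (n + 1) (-j) := G.mul_a_mul_a'_pow i m n j
  rw [mon_neg_natCast, triangular_t_zpow, triangular_b_pow, triangular_a'_pow_succ, triangular_b',
    diagonal_pow]
  simp only [Matrix.mul_fin_two, Matrix.of_apply, Matrix.cons_val, smul_zero, mul_zero, zero_mul,
    add_zero, zero_add, smul_mul_assoc, mul_add, G.b_pow_mul_a_mul_b'_pow hp, smul_pow p⁻¹ G.a',
    mul_smul_comm, smul_smul, hb', ha, ← mon_neg_natCast]
  rcases m with _ | m
  · simp only [qInt_zero, zero_add, zero_mul, zero_div, mul_zero, zero_smul, add_zero, zero_sub,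
      smul_neg, neg_smul, smul_smul]
    congr 2
    ring
  · rw [qInt_add _ (m + 1) (j + 1), Nat.add_sub_cancel, inv_pow]
    match_scalars <;> field_simp <;> ring

end TwistedGenerators

end TriangularMonomials

section Torus

theorem TwistedGenerators.scale_mon {k : Type*} [Field k] {p : k} {S : Type*} [Ring S]
    [Algebra k S] (G : TwistedGenerators p S) (u v w : kˣ) (i : ℤ) (m n : ℕ) (j : ℤ) :
    (G.scale u v w).mon i m n j = (w ^ i * v ^ (m - n : ℤ) * u ^ j) • G.mon i m n j := by
  simp only [mon, scale_t, scale_b, scale_b', scale_a, scale_a', val_units_smul_zpow, smul_pow,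
    signedPow_smul, smul_mul_smul_comm, zpow_sub, zpow_natCast, inv_pow, mul_assoc]

namespace GLq22

variable {k : Type} [Field k] {q : k} [NeZero q]

/-- The action of the three-dimensional torus on `GL_q(2,-2)`. -/
def torus (u v w : kˣ) : GLq22 k q →ₐ[k] GLq22 k q := lift ((gens k q).scale u v w)

theorem torus_mon (u v w : kˣ) (i : ℤ) (m n : ℕ) (j : ℤ) :
    torus u v w ((gens k q).mon i m n j) =
      (w ^ i * v ^ (m - n : ℤ) * u ^ j) • (gens k q).mon i m n j := by
  rw [torus, lift_mon, TwistedGenerators.scale_mon]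

theorem haar_torus (u v w : kˣ) (z : GLq22 k q) : haar k q (torus u v w z) = haar k q z := by
  suffices h : haar k q ∘ₗ (torus u v w).toLinearMap = haar k q from LinearMap.congr_fun h z
  refine linearMap_ext fun i m n j => ?_
  rw [LinearMap.comp_apply, AlgHom.toLinearMap_apply, torus_mon, Units.smul_def, map_smul, haar_mon]
  split_ifs with h
  · obtain ⟨rfl, rfl, rfl⟩ := h
    simp
  · exact smul_zero _

end GLq22

end Torus

namespace GLq22

variable {k : Type} [Field k] {q : k} [NeZero q]

variable (k q) in
/-- The representation of `GL_q(2,-2)` by upper triangular matrices over itself which defines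
`twistedDer`. -/
def twistedMatrix : GLq22 k q →ₐ[k] Matrix (Fin 2) (Fin 2) (GLq22 k q) :=
  lift ((gens k q).triangular (NeZero.ne (-q)))

variable (k q) in
/-- The twisted derivation `R` with `R z₁₁ = R z₂₁ = R τ = 0`, `R z₁₂ = z₁₁` and `R z₂₂ = z₂₁`. -/
def twistedDer : GLq22 k q →ₗ[k] GLq22 k q :=
  (LinearMap.proj 1 ∘ₗ LinearMap.proj 0 :
    Matrix (Fin 2) (Fin 2) (GLq22 k q) →ₗ[k] GLq22 k q) ∘ₗ (twistedMatrix k q).toLinearMap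

theorem twistedDer_apply (z : GLq22 k q) : twistedDer k q z = twistedMatrix k q z 0 1 := rfl

theorem twistedDer_mon_natCast (i : ℤ) (m n j : ℕ) : twistedDer k q ((gens k q).mon i m n j) =
    ((-q) ^ j * (qInt (q ^ 2) m * q ^ 2 / q ^ (2 * m))) •
      (gens k q).mon i (m - 1) n (j + 1 : ℕ) := by
  rw [twistedDer_apply, twistedMatrix, lift_mon, TwistedGenerators.triangular_mon_natCast, neg_sq,
    pow_mul (-q), neg_sq, ← pow_mul]

theorem twistedDer_mon_neg_succ (i : ℤ) (m n j : ℕ) :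
    twistedDer k q ((gens k q).mon i m n (-(j + 1 : ℕ))) = (-q / (-q) ^ (2 * m + j)) •
      (qInt (q ^ 2) m • (gens k q).mon i (m - 1) n (-j) -
        qInt (q ^ 2) (m + (j + 1)) • (gens k q).mon i m (n + 1) (-j)) := by
  rw [twistedDer_apply, twistedMatrix, lift_mon, TwistedGenerators.triangular_mon_neg_succ, neg_sq]

theorem haar_twistedDer (hq : ∀ n, qInt (q ^ 2) (n + 1) ≠ 0) (z : GLq22 k q) :
    haar k q (twistedDer k q z) = 0 := by
  suffices h : haar k q ∘ₗ twistedDer k q = 0 from LinearMap.congr_fun h z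
  refine linearMap_ext fun i m n j => ?_
  rw [LinearMap.comp_apply, LinearMap.zero_apply]
  obtain ⟨j, rfl⟩ | ⟨j, rfl⟩ : (∃ l : ℕ, j = l) ∨ ∃ l : ℕ, j = -(l + 1 : ℕ) := by
    rcases j with l | l
    exacts [.inl ⟨l, rfl⟩, .inr ⟨l, rfl⟩]
  · rw [twistedDer_mon_natCast, map_smul, haar_mon, if_neg (by lia), smul_zero]
  · rw [twistedDer_mon_neg_succ, map_smul, map_sub, map_smul, map_smul, haar_mon, haar_mon]
    rcases m with _ | m
    · simp
    · by_cases h : i = 0 ∧ m = n ∧ j = 0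
      · obtain ⟨rfl, rfl, rfl⟩ := h
        simp [hq]
      · rw [if_neg (by lia), if_neg (by lia)]
        simp

end GLq22

section InvarianceLocus

variable {k X M : Type*} [CommSemiring k] [Semiring X] [Algebra k X] [AddCommMonoid M] [Module k M]

/-- The elements at which the functional `h` is invariant under the coaction `α`. -/
def invarianceLocus (α : M →ₗ[k] X ⊗[k] M) (h : M →ₗ[k] k) : Submodule k M :=
  LinearMap.eqLocus (TensorProduct.rid k X ∘ₗ h.lTensor X ∘ₗ α) (Algebra.linearMap k X ∘ₗ h)

theorem mem_invarianceLocus {α : M →ₗ[k] X ⊗[k] M} {h : M →ₗ[k] k} {z : M} :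
    z ∈ invarianceLocus α h ↔
      TensorProduct.rid k X (h.lTensor X (α z)) = algebraMap k X (h z) := Iff.rfl

theorem apply_mem_invarianceLocus {α : M →ₗ[k] X ⊗[k] M} {h : M →ₗ[k] k} {f : M →ₗ[k] M}
    (hα : ∀ z, α (f z) = f.lTensor X (α z)) (hf : h ∘ₗ f = 0) (z : M) :
    f z ∈ invarianceLocus α h := by
  have hz : h (f z) = 0 := LinearMap.congr_fun hf z
  rw [mem_invarianceLocus, hα, ← LinearMap.lTensor_comp_apply, hf, hz]
  simp

end InvarianceLocus

section LeftTensorMatrix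

variable {k X Z : Type*} [CommSemiring k] [Semiring X] [Algebra k X] [Semiring Z] [Algebra k Z]
  {n : Type*} [Fintype n] [DecidableEq n]

variable (X) in
/-- The extension of a matrix representation `Φ` of `Z` to the representation
`x ⊗ z ↦ (x ⊗ Φ z r s)` of `X ⊗ Z`. -/
def lTensorMatrix (Φ : Z →ₐ[k] Matrix n n Z) : X ⊗[k] Z →ₐ[k] Matrix n n (X ⊗[k] Z) :=
  Algebra.TensorProduct.lift
    ((Matrix.scalarAlgHom n k).comp Algebra.TensorProduct.includeLeft)
    (Algebra.TensorProduct.includeRight.mapMatrix.comp Φ)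
    fun x z => by
      rw [commute_iff_eq]
      ext r s
      simp

theorem lTensorMatrix_tmul (Φ : Z →ₐ[k] Matrix n n Z) (x : X) (z : Z) :
    lTensorMatrix X Φ (x ⊗ₜ z) = (Φ z).map (x ⊗ₜ[k] ·) := by
  rw [lTensorMatrix, Algebra.TensorProduct.lift_tmul]
  ext r s
  simp

theorem lTensorMatrix_apply (Φ : Z →ₐ[k] Matrix n n Z) (f : Z →ₗ[k] Z) {r s : n}
    (hf : ∀ z, f z = Φ z r s) (y : X ⊗[k] Z) :
    lTensorMatrix X Φ y r s = f.lTensor X y := by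
  induction y using TensorProduct.induction_on with
  | zero => simp
  | tmul x z => simp [lTensorMatrix_tmul, hf]
  | add x y hx hy => simp [hx, hy]

end LeftTensorMatrix

namespace GLq22

variable {k : Type} [Field k] {q : k} [NeZero q] {X : Type*} [Ring X] [Algebra k X]
  {x : Fin 2 → Fin 2 → X} {t : X} {α : GLq22 k q →ₐ[k] X ⊗[k] GLq22 k q}

theorem twistedMatrix_zM_zero (i : Fin 2) :
    twistedMatrix k q (zM k q i 0) = !![zM k q i 0, 0; 0, (-q) • zM k q i 0] := by
  rw [twistedMatrix, lift_zM, TwistedGenerators.triangular_matrix_zero, matrix_gens]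

theorem twistedMatrix_zM_one (i : Fin 2) :
    twistedMatrix k q (zM k q i 1) = !![zM k q i 1, zM k q i 0; 0, (-q)⁻¹ • zM k q i 1] := by
  rw [twistedMatrix, lift_zM, TwistedGenerators.triangular_matrix_one, matrix_gens, matrix_gens]

theorem twistedMatrix_tauE :
    twistedMatrix k q (tauE k q) = !![tauE k q, 0; 0, tauE k q] := lift_t _

theorem torus_zM_zero (u v : kˣ) (i : Fin 2) :
    torus u v (u * v)⁻¹ (zM k q i 0) = u • zM k q i 0 := by
  rw [torus, lift_zM, TwistedGenerators.scale_matrix_zero, matrix_gens]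

theorem torus_zM_one (u v : kˣ) (i : Fin 2) :
    torus u v (u * v)⁻¹ (zM k q i 1) = v • zM k q i 1 := by
  rw [torus, lift_zM, TwistedGenerators.scale_matrix_one, matrix_gens]

theorem torus_tauE (u v w : kˣ) : torus u v w (tauE k q) = w • tauE k q := lift_t _

section

variable (hα : ∀ i j, α (zM k q i j) = ∑ l, x i l ⊗ₜ[k] zM k q l j)
    (hατ : α (tauE k q) = t ⊗ₜ[k] tauE k q)

include hα hατ

theorem coaction_twistedDer (z : GLq22 k q) :
    α (twistedDer k q z) = (twistedDer k q).lTensor X (α z) := by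
  suffices h : α.mapMatrix.comp (twistedMatrix k q) =
      (lTensorMatrix X (twistedMatrix k q)).comp α by
    rw [← lTensorMatrix_apply (twistedMatrix k q) _ twistedDer_apply]
    exact congr_fun₂ (DFunLike.congr_fun h z) 0 1
  refine algHom_ext (fun i j => ?_) ?_
  · fin_cases j
    · ext r s
      fin_cases r <;> fin_cases s <;>
        simp [hα, twistedMatrix_zM_zero, lTensorMatrix_tmul]
    · ext r s
      fin_cases r <;> fin_cases s <;>
        simp [hα, twistedMatrix_zM_one, lTensorMatrix_tmul]
  · ext r s
    fin_cases r <;> fin_cases s <;> simp [hατ, twistedMatrix_tauE, lTensorMatrix_tmul]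

theorem coaction_torus (u v : kˣ) (z : GLq22 k q) :
    α (torus u v (u * v)⁻¹ z) = (torus u v (u * v)⁻¹).toLinearMap.lTensor X (α z) := by
  suffices h : α.comp (torus u v (u * v)⁻¹) =
      (Algebra.TensorProduct.map (AlgHom.id k X) (torus u v (u * v)⁻¹)).comp α from
    DFunLike.congr_fun h z
  refine algHom_ext (fun i j => ?_) ?_
  · fin_cases j
    · simp [hα, torus_zM_zero, Units.smul_def, -mul_inv_rev]
    · simp [hα, torus_zM_one, Units.smul_def, -mul_inv_rev]
  · simp [hατ, torus_tauE, Units.smul_def]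

end

end GLq22

theorem two_zpow_eq_one_iff {k : Type*} [DivisionRing k] [CharZero k] {e : ℤ} :
    (2 : k) ^ e = 1 ↔ e = 0 := by
  refine ⟨fun h => ?_, fun h => by rw [h, zpow_zero]⟩
  have h' : (2 : ℚ) ^ e = 1 := Rat.cast_injective (α := k) (by simpa using h)
  exact (zpow_eq_one_iff_right₀ (by norm_num) (by norm_num)).1 h'

theorem mem_of_smul_sub_self_mem {k M : Type*} [Field k] [AddCommGroup M] [Module k M]
    {P : Submodule k M} {c : k} {x : M} (hc : c ≠ 1) (h : c • x - x ∈ P) : x ∈ P := by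
  rw [← P.smul_mem_iff (sub_ne_zero.2 hc), sub_smul, one_smul]
  exact h

namespace GLq22

variable {k : Type} [Field k] [CharZero k] {q : k} [NeZero q]

theorem mem_of_torus_mem {P : Submodule k (GLq22 k q)}
    (hP : ∀ u v z, torus u v (u * v)⁻¹ z - z ∈ P) {i : ℤ} {m n : ℕ} {j : ℤ}
    (hne : ¬(j = i ∧ (m : ℤ) - n = i)) : (gens k q).mon i m n j ∈ P := by
  have key {u v : kˣ} (h : (u : k) ^ (j - i) * (v : k) ^ ((m : ℤ) - n - i) ≠ 1) :
      (gens k q).mon i m n j ∈ P := by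
    have hmem := hP u v ((gens k q).mon i m n j)
    rw [torus_mon, Units.smul_def] at hmem
    refine mem_of_smul_sub_self_mem ?_ hmem
    convert h using 1
    push_cast
    rw [zpow_sub₀ u.ne_zero, zpow_sub₀ v.ne_zero (m - n), inv_zpow, mul_zpow]
    field_simp
  set two : kˣ := Units.mk0 2 two_ne_zero
  by_cases hj : j = i
  · refine key (u := 1) (v := two) ?_
    simpa [two, two_zpow_eq_one_iff, sub_eq_zero] using fun h => hne ⟨hj, h⟩
  · refine key (u := two) (v := 1) ?_
    simpa [two, two_zpow_eq_one_iff, sub_eq_zero] using hj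

/-- Modulo the infinitesimal and the torus action, every monomial is a multiple of `1`. -/
theorem eq_top_of_twistedDer_mem_of_torus_mem (hq : ∀ n, qInt (q ^ 2) (n + 1) ≠ 0)
    {P : Submodule k (GLq22 k q)} (one : 1 ∈ P) (der : ∀ z, twistedDer k q z ∈ P)
    (tor : ∀ u v z, torus u v (u * v)⁻¹ z - z ∈ P) : P = ⊤ := by
  have hq0 : q ≠ 0 := NeZero.ne q
  have neg (n : ℕ) : ∀ i m (j : ℕ), (gens k q).mon i m n (-j) ∈ P := by
    induction n with
    | zero =>
      intro i m j
      by_cases h : (-j : ℤ) = i ∧ (m : ℤ) - (0 : ℕ) = i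
      · obtain ⟨rfl, rfl, rfl⟩ : i = 0 ∧ m = 0 ∧ j = 0 := by lia
        simpa using one
      · exact mem_of_torus_mem tor h
    | succ n ih =>
      intro i m j
      have h := der ((gens k q).mon i m n (-(j + 1 : ℕ)))
      rw [twistedDer_mon_neg_succ, P.smul_mem_iff (by simp [hq0]),
        P.sub_mem_iff_right (P.smul_mem _ (ih i (m - 1) j))] at h
      exact (P.smul_mem_iff (hq _)).1 h
  have pos (i : ℤ) (m n j : ℕ) : (gens k q).mon i m n (j + 1 : ℕ) ∈ P := by
    have h := der ((gens k q).mon i (m + 1) n j)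
    rw [twistedDer_mon_natCast, P.smul_mem_iff (by simp [hq0, hq])] at h
    exact h
  rw [eq_top_iff, ← monSpan_gens]
  refine Submodule.span_le.2 ?_
  rintro _ ⟨⟨i, m, n, j⟩, rfl⟩
  obtain ⟨j, rfl | rfl⟩ := j.eq_nat_or_neg
  · rcases j with _ | j
    exacts [by simpa using neg n i m 0, pos i m n j]
  · exact neg n i m j

variable {X : Type*} [Ring X] [Algebra k X]

theorem invarianceLocus_haar_eq_top (hq : ∀ n, qInt (q ^ 2) (n + 1) ≠ 0)
    {x : Fin 2 → Fin 2 → X} {t : X} {α : GLq22 k q →ₐ[k] X ⊗[k] GLq22 k q}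
    (hα : ∀ i j, α (zM k q i j) = ∑ l, x i l ⊗ₜ[k] zM k q l j)
    (hατ : α (tauE k q) = t ⊗ₜ[k] tauE k q) :
    invarianceLocus α.toLinearMap (haar k q) = ⊤ := by
  refine eq_top_of_twistedDer_mem_of_torus_mem hq ?_ ?_ ?_
  · simp [mem_invarianceLocus, Algebra.TensorProduct.one_def]
  · exact apply_mem_invarianceLocus (coaction_twistedDer hα hατ)
      (LinearMap.ext fun z => haar_twistedDer hq z)
  · intro u v
    set T : GLq22 k q →ₗ[k] GLq22 k q := (torus u v (u * v)⁻¹).toLinearMap with hT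
    refine apply_mem_invarianceLocus (α := α.toLinearMap) (f := T - .id) (fun z => ?_)
      (LinearMap.ext fun z => ?_)
    · simp [hT, coaction_torus hα hατ, LinearMap.lTensor_sub, -mul_inv_rev]
    · simp [hT, haar_torus]

end GLq22

section JacksonIntegral

open Polynomial

/-- The Jackson integral over `[0, 1]` in base `r`, given by its moments `1 / [n + 1]`. -/
def jacksonIntegral {k : Type*} [Field k] (r : k) : k[X] →ₗ[k] k :=
  lsum fun n => (qInt r (n + 1))⁻¹ • LinearMap.id

theorem jacksonIntegral_monomial {k : Type*} [Field k] (r : k) (n : ℕ) (c : k) :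
    jacksonIntegral r (monomial n c) = (qInt r (n + 1))⁻¹ * c := by
  simp [jacksonIntegral, lsum_apply]

theorem jacksonIntegral_inv {k : Type*} [Field k] {r : k} (hr : r ≠ 0) (f : k[X]) :
    jacksonIntegral r⁻¹ f = jacksonIntegral r (f.comp (C r * X)) := by
  induction f using Polynomial.induction_on' with
  | add f g hf hg => rw [map_add, add_comp, map_add, hf, hg]
  | monomial n c =>
    rw [monomial_comp, mul_pow, ← C_pow, ← mul_assoc, ← C_mul, C_mul_X_pow_eq_monomial,
      jacksonIntegral_monomial, jacksonIntegral_monomial, ← qInt_inv_mul_pow hr]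
    field_simp

/-- A polynomial is nonnegative on `S` if its values there are nonnegative reals. -/
def IsNonnegOn (f : ℂ[X]) (S : Set ℝ) : Prop := ∀ x ∈ S, 0 ≤ f.eval (x : ℂ)

/-- The subsets of `[0, 1]` on which `f(x) ↦ (1 - r x) f(r x)` and `f(x) ↦ (1 - x) f(r⁻¹ x)`
preserve nonnegativity: a point may be moved out of `S` only if its weight vanishes. -/
structure IsLadder (r : ℝ) (S : Set ℝ) : Prop where
  nonneg : ∀ x ∈ S, 0 ≤ x
  le_one : ∀ x ∈ S, x ≤ 1
  mul_le_one : ∀ x ∈ S, r * x ≤ 1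
  mul_mem : ∀ x ∈ S, r * x = 1 ∨ r * x ∈ S
  inv_mul_mem : ∀ x ∈ S, x = 1 ∨ r⁻¹ * x ∈ S

theorem isLadder_range_pow {r : ℝ} (h0 : 0 < r) (h1 : r ≤ 1) :
    IsLadder r (Set.range fun n : ℕ => r ^ n) where
  nonneg := by rintro _ ⟨n, rfl⟩; positivity
  le_one := by rintro _ ⟨n, rfl⟩; exact pow_le_one₀ h0.le h1
  mul_le_one := by rintro _ ⟨n, rfl⟩; simpa only [← pow_succ'] using pow_le_one₀ h0.le h1
  mul_mem := by rintro _ ⟨n, rfl⟩; exact .inr ⟨n + 1, pow_succ' _ _⟩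
  inv_mul_mem := by
    rintro _ ⟨_ | n, rfl⟩
    · exact .inl (pow_zero r)
    · exact .inr ⟨n, by simp only [pow_succ', inv_mul_cancel_left₀ h0.ne']⟩

theorem isLadder_one_Icc : IsLadder 1 (Set.Icc 0 1) where
  nonneg _ hx := hx.1
  le_one _ hx := hx.2
  mul_le_one _ hx := by simpa using hx.2
  mul_mem _ hx := .inr (by simpa using hx)
  inv_mul_mem _ hx := .inr (by simpa using hx)

theorem IsLadder.inv {r : ℝ} (hr : r ≠ 0) {S : Set ℝ} (h : IsLadder r S) (h0 : 0 ≤ r) :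
    IsLadder r⁻¹ ((r * ·) '' S) where
  nonneg := by rintro _ ⟨x, hx, rfl⟩; exact mul_nonneg h0 (h.nonneg x hx)
  le_one := by rintro _ ⟨x, hx, rfl⟩; exact h.mul_le_one x hx
  mul_le_one := by rintro _ ⟨x, hx, rfl⟩; simpa [hr] using h.le_one x hx
  mul_mem := by
    rintro _ ⟨x, hx, rfl⟩
    have := (h.inv_mul_mem x hx).imp_right (Set.mem_image_of_mem (r * ·))
    simpa [hr] using this
  inv_mul_mem := by
    rintro _ ⟨x, hx, rfl⟩
    simpa using (h.mul_mem x hx).imp_right (Set.mem_image_of_mem (r * ·))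

theorem hasSum_jacksonIntegral {r : ℝ} (h0 : 0 ≤ r) (h1 : r < 1) (f : ℂ[X]) :
    HasSum (fun n : ℕ => (((1 - r) * r ^ n : ℝ) : ℂ) * f.eval ((r ^ n : ℝ) : ℂ))
      (jacksonIntegral (r : ℂ) f) := by
  induction f using Polynomial.induction_on' with
  | add f g hf hg => simpa only [map_add, eval_add, mul_add] using hf.add hg
  | monomial m c =>
    have hgeom : HasSum (fun n => (1 - r) * (r ^ (m + 1)) ^ n) (qInt r (m + 1))⁻¹ := by
      rw [inv_qInt h1.ne]
      exact (hasSum_geometric_of_lt_one (pow_nonneg h0 _)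
        (pow_lt_one₀ h0 h1 m.succ_ne_zero)).mul_left (1 - r)
    rw [jacksonIntegral_monomial, show qInt (r : ℂ) (m + 1) = (qInt r (m + 1) : ℝ) by simp [qInt],
      ← Complex.ofReal_inv]
    refine ((Complex.hasSum_ofReal.2 hgeom).mul_right c).congr_fun fun n => ?_
    rw [eval_monomial]
    push_cast
    ring

theorem jacksonIntegral_one_eq_integral (f : ℂ[X]) :
    jacksonIntegral 1 f = ∫ x : ℝ in 0..1, f.eval (x : ℂ) := by
  have hint (f : ℂ[X]) :
      IntervalIntegrable (fun x : ℝ => f.eval (x : ℂ)) MeasureTheory.volume 0 1 :=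
    (f.continuous.comp Complex.continuous_ofReal).intervalIntegrable _ _
  induction f using Polynomial.induction_on' with
  | add f g hf hg =>
    simp only [map_add, hf, hg, eval_add, intervalIntegral.integral_add (hint f) (hint g)]
  | monomial n c =>
    simp only [jacksonIntegral_monomial, eval_monomial, ← Complex.ofReal_pow,
      intervalIntegral.integral_const_mul, intervalIntegral.integral_ofReal, integral_pow]
    simp [qInt, mul_comm]

theorem exists_isLadder_of_lt_one {r : ℝ} (h0 : 0 < r) (h1 : r < 1) :
    ∃ S, IsLadder r S ∧ ∀ f, IsNonnegOn f S → 0 ≤ jacksonIntegral (r : ℂ) f := by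
  refine ⟨_, isLadder_range_pow h0 h1.le, fun f hf => ?_⟩
  refine (hasSum_jacksonIntegral h0.le h1 f).nonneg fun n => mul_nonneg ?_ (hf _ ⟨n, rfl⟩)
  exact_mod_cast mul_nonneg (sub_nonneg.2 h1.le) (pow_nonneg h0.le n)

theorem jacksonIntegral_one_nonneg {f : ℂ[X]} (hf : IsNonnegOn f (Set.Icc 0 1)) :
    0 ≤ jacksonIntegral 1 f := by
  have hreal : Set.EqOn (fun x : ℝ => f.eval (x : ℂ)) (fun x => ((f.eval (x : ℂ)).re : ℂ))
      (Set.uIcc 0 1) := fun x hx =>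
    Complex.eq_re_of_ofReal_le (r := 0) (by simpa using hf x (by
      rwa [Set.uIcc_of_le zero_le_one] at hx))
  rw [jacksonIntegral_one_eq_integral, intervalIntegral.integral_congr hreal,
    intervalIntegral.integral_ofReal]
  exact_mod_cast intervalIntegral.integral_nonneg zero_le_one fun x hx =>
    (Complex.le_def.1 (hf x hx)).1

theorem exists_isLadder {r : ℝ} (hr : 0 < r) :
    ∃ S, IsLadder r S ∧ ∀ f, IsNonnegOn f S → 0 ≤ jacksonIntegral (r : ℂ) f := by
  rcases lt_trichotomy r 1 with h | rfl | h
  · exact exists_isLadder_of_lt_one hr h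
  · exact ⟨_, isLadder_one_Icc, fun f hf => by simpa using jacksonIntegral_one_nonneg hf⟩
  · obtain ⟨S, hS, hpos⟩ := exists_isLadder_of_lt_one (inv_pos.2 hr) (inv_lt_one_of_one_lt₀ h)
    refine ⟨_, inv_inv r ▸ hS.inv (inv_ne_zero hr.ne') (inv_nonneg.2 hr.le), fun f hf => ?_⟩
    have hr' : (↑r⁻¹ : ℂ) ≠ 0 := by simpa using hr.ne'
    rw [← inv_inv (r : ℂ), ← Complex.ofReal_inv, jacksonIntegral_inv hr']
    exact hpos _ fun x hx => by simpa using hf _ ⟨x, hx, rfl⟩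

end JacksonIntegral

section LadderShift

open Polynomial

/-- The polynomial `(1 - r x) f(r x)`. -/
def shiftUp {k : Type*} [CommRing k] (r : k) (f : k[X]) : k[X] := (1 - C r * X) * f.comp (C r * X)

/-- The polynomial `(1 - x) f(r⁻¹ x)`. -/
def shiftDown {k : Type*} [Field k] (r : k) (f : k[X]) : k[X] := (1 - X) * f.comp (C r⁻¹ * X)

/-- The `|j|`-fold iterate of `shiftUp r` for `j ≥ 0` and of `shiftDown r` for `j < 0`. -/
def shift {k : Type*} [Field k] (r : k) : ℤ → k[X] → k[X]
  | (j : ℕ) => (shiftUp r)^[j]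
  | .negSucc j => (shiftDown r)^[j + 1]

namespace IsNonnegOn

variable {f : ℂ[X]} {S : Set ℝ} {r : ℝ}

theorem shiftUp (hf : IsNonnegOn f S) (hS : IsLadder r S) : IsNonnegOn (shiftUp (r : ℂ) f) S := by
  intro x hx
  have heval : (_root_.shiftUp (r : ℂ) f).eval (x : ℂ) =
      ((1 - r * x : ℝ) : ℂ) * f.eval ((r * x : ℝ) : ℂ) := by simp [_root_.shiftUp]
  rw [heval]
  rcases hS.mul_mem x hx with h | h
  · simp [h]
  · refine mul_nonneg ?_ (hf _ h)
    exact_mod_cast sub_nonneg.2 (hS.mul_le_one x hx)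

theorem shiftDown (hf : IsNonnegOn f S) (hS : IsLadder r S) :
    IsNonnegOn (shiftDown (r : ℂ) f) S := by
  intro x hx
  have heval : (_root_.shiftDown (r : ℂ) f).eval (x : ℂ) =
      ((1 - x : ℝ) : ℂ) * f.eval ((r⁻¹ * x : ℝ) : ℂ) := by simp [_root_.shiftDown]
  rw [heval]
  rcases hS.inv_mul_mem x hx with h | h
  · simp [h]
  · refine mul_nonneg ?_ (hf _ h)
    exact_mod_cast sub_nonneg.2 (hS.le_one x hx)

theorem shift (hf : IsNonnegOn f S) (hS : IsLadder r S) (j : ℤ) :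
    IsNonnegOn (shift (r : ℂ) j f) S := by
  cases j with
  | ofNat j => exact Function.Iterate.rec (IsNonnegOn · S) hf (fun _ h => h.shiftUp hS) j
  | negSucc j =>
    exact Function.Iterate.rec (IsNonnegOn · S) hf (fun _ h => h.shiftDown hS) (j + 1)

end IsNonnegOn

theorem isNonnegOn_map_star_mul {S : Set ℝ} (hS : ∀ x ∈ S, 0 ≤ x) (f : ℂ[X]) (n : ℕ) :
    IsNonnegOn (f.map (starRingEnd ℂ) * (X ^ n * f)) S := by
  intro x hx
  have hstar : (f.map (starRingEnd ℂ)).eval (x : ℂ) = starRingEnd ℂ (f.eval (x : ℂ)) := by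
    simpa only [Complex.conj_ofReal] using eval_map_apply (p := f) (starRingEnd ℂ) (x : ℂ)
  rw [eval_mul, eval_mul, eval_pow, eval_X, hstar, mul_left_comm, ← Complex.normSq_eq_conj_mul_self]
  exact_mod_cast mul_nonneg (pow_nonneg (hS x hx) n) (Complex.normSq_nonneg _)

end LadderShift

section WeightVectors

open Polynomial

theorem aeval_mul_of_mul_eq_smul {k S : Type*} [CommRing k] [Ring S] [Algebra k S] {x y : S} {c : k}
    (h : x * y = c • (y * x)) (f : k[X]) :
    aeval x f * y = y * aeval x (f.comp (C c * X)) := by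
  have h' : SemiconjBy y (c • x) x := by rw [SemiconjBy, mul_smul_comm, h]
  induction f using Polynomial.induction_on' with
  | add f g hf hg => rw [map_add, add_mul, hf, hg, add_comp, map_add, mul_add]
  | monomial n e =>
    rw [monomial_comp, mul_pow, ← C_pow, map_mul, map_mul, aeval_C, aeval_C, aeval_X_pow,
      ← Algebra.smul_def, ← Algebra.smul_def, ← _root_.smul_pow, mul_smul_comm, (h'.pow_right n).eq,
      aeval_monomial, ← Algebra.smul_def, smul_mul_assoc]

namespace TwistedGenerators

variable {k : Type*} [Field k] {p : k} {S : Type*} [Ring S] [Algebra k S]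
  (G : TwistedGenerators p S)

theorem b_mul_b'_mul_a : G.b * G.b' * G.a = p ^ 2 • (G.a * (G.b * G.b')) := by
  rw [mul_assoc, G.b'_mul_a, mul_smul_comm, ← mul_assoc, G.b_mul_a, smul_mul_assoc, smul_smul,
    mul_assoc, sq]

theorem a'_mul_b_mul_b' : G.a' * (G.b * G.b') = p ^ 2 • (G.b * G.b' * G.a') := by
  rw [← mul_assoc, G.a'_mul_b, smul_mul_assoc, mul_assoc, G.a'_mul_b', mul_smul_comm, smul_smul,
    mul_assoc, sq]

theorem a'_mul_aeval_mul_a (f : k[X]) :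
    G.a' * (aeval (G.b * G.b') f * G.a) = aeval (G.b * G.b') (shiftUp (p ^ 2) f) := by
  rw [aeval_mul_of_mul_eq_smul G.b_mul_b'_mul_a, ← mul_assoc, G.a'_mul_a, shiftUp, map_mul, map_sub,
    map_one, map_mul, aeval_C, aeval_X, Algebra.smul_def]

theorem a_mul_aeval_mul_a' (hp : p ≠ 0) (f : k[X]) :
    G.a * (aeval (G.b * G.b') f * G.a') = aeval (G.b * G.b') (shiftDown (p ^ 2) f) := by
  have h : G.b * G.b' * G.a' = (p ^ 2)⁻¹ • (G.a' * (G.b * G.b')) := by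
    rw [G.a'_mul_b_mul_b', inv_smul_smul₀ (pow_ne_zero 2 hp)]
  rw [aeval_mul_of_mul_eq_smul h, ← mul_assoc, G.a_mul_a', shiftDown, map_mul, map_sub, map_one,
    aeval_X]

theorem signedPow_mul_aeval_mul_signedPow (hp : p ≠ 0) (j : ℤ) (f : k[X]) :
    signedPow G.a' G.a j * (aeval (G.b * G.b') f * signedPow G.a G.a' j) =
      aeval (G.b * G.b') (shift (p ^ 2) j f) := by
  have iterate {x y : S} {F : k[X] → k[X]}
      (h : ∀ f, x * (aeval (G.b * G.b') f * y) = aeval (G.b * G.b') (F f)) (n : ℕ) (f : k[X]) :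
      x ^ n * (aeval (G.b * G.b') f * y ^ n) = aeval (G.b * G.b') (F^[n] f) := by
    induction n generalizing f with
    | zero => simp
    | succ n ih =>
      rw [Function.iterate_succ_apply, ← ih, ← h, pow_succ, pow_succ']
      simp only [mul_assoc]
  cases j with
  | ofNat n => exact iterate G.a'_mul_aeval_mul_a n f
  | negSucc n => exact iterate (G.a_mul_aeval_mul_a' hp) (n + 1) f

theorem signedPow_b'_mul_signedPow_b (d : ℤ) :
    signedPow G.b' G.b d * signedPow G.b G.b' d = (G.b * G.b') ^ d.natAbs := by
  cases d with
  | ofNat n => exact (G.commute_b'.mul_pow n).symm.trans (congrArg (· ^ n) G.b'_mul_b)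
  | negSucc n => exact (G.commute_b'.symm.mul_pow (n + 1)).symm

/-- The map `f ↦ t ^ i * b ^ d * f (b * b') * a ^ j` for `s = (i, d, j)`, where `b ^ (-d)` and
`a ^ (-j)` stand for `b' ^ d` and `a' ^ j`. -/
def weightVector (s : ℤ × ℤ × ℤ) : k[X] →ₗ[k] S :=
  LinearMap.mulLeft k (↑(G.t ^ s.1) * signedPow G.b G.b' s.2.1) ∘ₗ
    LinearMap.mulRight k (signedPow G.a G.a' s.2.2) ∘ₗ (aeval (G.b * G.b')).toLinearMap

theorem weightVector_apply (s : ℤ × ℤ × ℤ) (f : k[X]) :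
    G.weightVector s f = ↑(G.t ^ s.1) * signedPow G.b G.b' s.2.1 *
      (aeval (G.b * G.b') f * signedPow G.a G.a' s.2.2) := rfl

theorem b_pow_mul_b'_pow (m n : ℕ) :
    G.b ^ m * G.b' ^ n = signedPow G.b G.b' (m - n) * (G.b * G.b') ^ min m n := by
  have hcomm : Commute G.b G.b' := G.commute_b'.symm
  rcases le_total n m with h | h
  · obtain ⟨l, rfl⟩ := Nat.exists_eq_add_of_le' h
    rw [min_eq_right h, Nat.cast_add, add_sub_cancel_right, signedPow_natCast, hcomm.mul_pow,
      ← mul_assoc, ← pow_add]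
  · obtain ⟨l, rfl⟩ := Nat.exists_eq_add_of_le' h
    rw [min_eq_left h, Nat.cast_add, sub_add_cancel_right, signedPow_neg_natCast, hcomm.mul_pow,
      ← mul_assoc, (hcomm.symm.pow_pow l m).eq, mul_assoc, ← pow_add]

theorem mon_eq_weightVector (i : ℤ) (m n : ℕ) (j : ℤ) :
    G.mon i m n j = G.weightVector (i, m - n, j) (X ^ min m n) := by
  rw [weightVector_apply, mon, map_pow, aeval_X, b_pow_mul_b'_pow]
  simp only [mul_assoc]

theorem monSpan_le_iSup_range_weightVector :
    G.monSpan ≤ ⨆ s, LinearMap.range (G.weightVector s) := by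
  refine Submodule.span_le.2 ?_
  rintro _ ⟨⟨i, m, n, j⟩, rfl⟩
  exact Submodule.mem_iSup_of_mem (i, (m - n : ℤ), j) ⟨_, (G.mon_eq_weightVector i m n j).symm⟩

end TwistedGenerators

end WeightVectors

section Star

open Polynomial

theorem star_signedPow {S : Type*} [Monoid S] [StarMul S] (x y : S) (n : ℤ) :
    star (signedPow x y n) = signedPow (star x) (star y) n := by
  cases n <;> exact star_pow _ _

theorem star_aeval {k S : Type*} [CommRing k] [StarRing k] [Ring S] [StarRing S] [Algebra k S]
    [StarModule k S] (x : S) (f : k[X]) :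
    star (aeval x f) = aeval (star x) (f.map (starRingEnd k)) := by
  induction f using Polynomial.induction_on' with
  | add f g hf hg => rw [map_add, star_add, hf, hg, Polynomial.map_add, map_add]
  | monomial n c =>
    rw [map_monomial, aeval_monomial, aeval_monomial, ← Algebra.smul_def, ← Algebra.smul_def,
      star_smul, star_pow, starRingEnd_apply]

namespace TwistedGenerators

variable {k : Type*} [Field k] {p : k} {S : Type*} [Ring S] [Algebra k S] [StarRing S]

/-- The compatibility of the generators with the `*`-structure: `a' = a*`, `b' = b*`, and `t` is
unitary. -/
structure IsUnitary (G : TwistedGenerators p S) : Prop where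
  star_a : star G.a = G.a'
  star_b : star G.b = G.b'
  star_t : star (G.t : S) = ↑G.t⁻¹

namespace IsUnitary

variable {G : TwistedGenerators p S} (hG : G.IsUnitary)
include hG

theorem star_a' : star G.a' = G.a := by rw [← hG.star_a, star_star]

theorem star_b' : star G.b' = G.b := by rw [← hG.star_b, star_star]

theorem star_t_zpow (i : ℤ) : star (↑(G.t ^ i) : S) = ↑(G.t ^ (-i)) := by
  have h : star G.t = G.t⁻¹ := Units.ext hG.star_t
  rw [← Units.coe_star, star_zpow, h, inv_zpow']

variable [StarRing k] [StarModule k S]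

theorem star_weightVector (s : ℤ × ℤ × ℤ) (f : k[X]) :
    star (G.weightVector s f) = signedPow G.a' G.a s.2.2 *
      aeval (G.b * G.b') (f.map (starRingEnd k)) *
        (signedPow G.b' G.b s.2.1 * ↑(G.t ^ (-s.1))) := by
  simp only [weightVector_apply, star_mul, star_signedPow, star_aeval, hG.star_a, hG.star_a',
    hG.star_b, hG.star_b', hG.star_t_zpow]

theorem star_weightVector_mul_self (hp : p ≠ 0) (s : ℤ × ℤ × ℤ) (f : k[X]) :
    star (G.weightVector s f) * G.weightVector s f = aeval (G.b * G.b')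
      (shift (p ^ 2) s.2.2 (f.map (starRingEnd k) * (X ^ s.2.1.natAbs * f))) := by
  have ht : (↑(G.t ^ (-s.1)) : S) * ↑(G.t ^ s.1) = 1 := by
    rw [← Units.val_mul, ← zpow_add, neg_add_cancel, zpow_zero, Units.val_one]
  rw [← G.signedPow_mul_aeval_mul_signedPow hp, map_mul, map_mul, map_pow, aeval_X,
    ← G.signedPow_b'_mul_signedPow_b, hG.star_weightVector, weightVector_apply]
  calc _ = signedPow G.a' G.a s.2.2 * aeval (G.b * G.b') (f.map (starRingEnd k)) *
        (signedPow G.b' G.b s.2.1 * ((↑(G.t ^ (-s.1)) * ↑(G.t ^ s.1)) *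
          (signedPow G.b G.b' s.2.1 *
            (aeval (G.b * G.b') f * signedPow G.a G.a' s.2.2)))) := by simp only [mul_assoc]
    _ = _ := by simp only [ht, one_mul, mul_assoc]

end IsUnitary

end TwistedGenerators

theorem map_star_mul_self_nonneg_of_orthogonal {k S ι : Type*} [CommRing k] [PartialOrder k]
    [IsOrderedRing k] [Ring S] [StarRing S] [Algebra k S] {h : S →ₗ[k] k} {P : ι → Submodule k S}
    (hP : ⨆ i, P i = ⊤) (horth : ∀ i j, i ≠ j → ∀ x ∈ P i, ∀ y ∈ P j, h (star x * y) = 0)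
    (hnonneg : ∀ i, ∀ x ∈ P i, 0 ≤ h (star x * x)) (z : S) : 0 ≤ h (star z * z) := by
  obtain ⟨F, hF, rfl⟩ := (Submodule.mem_iSup_iff_exists_finsupp P z).1 (hP ▸ Submodule.mem_top)
  rw [Finsupp.sum, star_sum, Finset.sum_mul_sum, map_sum]
  refine Finset.sum_nonneg fun i hi => ?_
  rw [map_sum, Finset.sum_eq_single_of_mem i hi fun j _ hj => horth i j hj.symm _ (hF i) _ (hF j)]
  exact hnonneg i _ (hF i)

end Star

namespace GLq22

open Polynomial

section Weights

variable {k : Type} [Field k] {q : k} [NeZero q]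

variable (k q) in
/-- The elements of weight `(i, d, j)` under the torus, such as `τ ^ i * b ^ d * a ^ j`. -/
def weightSpace (s : ℤ × ℤ × ℤ) : Submodule k (GLq22 k q) where
  carrier := {z | ∀ u v w, torus u v w z = (w ^ s.1 * v ^ s.2.1 * u ^ s.2.2) • z}
  zero_mem' u v w := by rw [map_zero, smul_zero]
  add_mem' hx hy u v w := by rw [map_add, hx, hy, smul_add]
  smul_mem' c x hx u v w := by rw [map_smul, hx, smul_comm]

theorem mul_mem_weightSpace {s s' : ℤ × ℤ × ℤ} {x y : GLq22 k q} (hx : x ∈ weightSpace k q s)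
    (hy : y ∈ weightSpace k q s') : x * y ∈ weightSpace k q (s + s') := fun u v w => by
  rw [map_mul, hx, hy, smul_mul_smul_comm, Prod.fst_add, Prod.snd_add, Prod.fst_add, Prod.snd_add,
    zpow_add, zpow_add, zpow_add, mul_mul_mul_comm, mul_mul_mul_comm (w ^ _)]

theorem mon_mem_weightSpace (i : ℤ) (m n : ℕ) (j : ℤ) :
    (gens k q).mon i m n j ∈ weightSpace k q (i, m - n, j) := fun u v w => by
  simpa [Units.smul_def] using torus_mon u v w i m n j

theorem t_zpow_mem_weightSpace (i : ℤ) :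
    ↑((gens k q).t ^ i) ∈ weightSpace k q (i, 0, 0) := by
  simpa [TwistedGenerators.mon] using mon_mem_weightSpace (q := q) i 0 0 0

theorem signedPow_b_mem_weightSpace (d : ℤ) :
    signedPow (gens k q).b (gens k q).b' d ∈ weightSpace k q (0, d, 0) := by
  obtain ⟨n, rfl | rfl⟩ := d.eq_nat_or_neg
  · simpa [TwistedGenerators.mon] using mon_mem_weightSpace (q := q) 0 n 0 0
  · simpa [TwistedGenerators.mon] using mon_mem_weightSpace (q := q) 0 0 n 0

theorem signedPow_a_mem_weightSpace (j : ℤ) :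
    signedPow (gens k q).a (gens k q).a' j ∈ weightSpace k q (0, 0, j) := by
  simpa [TwistedGenerators.mon] using mon_mem_weightSpace (q := q) 0 0 0 j

theorem b_mul_b'_pow (n : ℕ) :
    ((gens k q).b * (gens k q).b') ^ n = (gens k q).mon 0 n n 0 := by
  simp [TwistedGenerators.mon, ((gens k q).commute_b'.symm).mul_pow]

theorem aeval_b_mul_b'_mem_weightSpace (f : k[X]) :
    aeval ((gens k q).b * (gens k q).b') f ∈ weightSpace k q (0, 0, 0) := by
  rw [aeval_eq_sum_range]
  refine sum_mem fun n _ => Submodule.smul_mem _ _ ?_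
  simpa [b_mul_b'_pow] using mon_mem_weightSpace (q := q) 0 n n 0

theorem weightVector_mem_weightSpace (s : ℤ × ℤ × ℤ) (f : k[X]) :
    (gens k q).weightVector s f ∈ weightSpace k q s := by
  simpa [TwistedGenerators.weightVector_apply] using
    mul_mem_weightSpace (mul_mem_weightSpace (t_zpow_mem_weightSpace s.1)
      (signedPow_b_mem_weightSpace s.2.1)) (mul_mem_weightSpace (aeval_b_mul_b'_mem_weightSpace f)
      (signedPow_a_mem_weightSpace s.2.2))

theorem star_weightVector_mem_weightSpace [StarRing k] [StarRing (GLq22 k q)]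
    [StarModule k (GLq22 k q)] (h : (gens k q).IsUnitary) (s : ℤ × ℤ × ℤ) (f : k[X]) :
    star ((gens k q).weightVector s f) ∈ weightSpace k q (-s) := by
  obtain ⟨i, d, j⟩ := s
  rw [h.star_weightVector, ← signedPow_neg, ← signedPow_neg _ _ d]
  simpa using mul_mem_weightSpace (mul_mem_weightSpace (signedPow_a_mem_weightSpace (-j))
    (aeval_b_mul_b'_mem_weightSpace (f.map (starRingEnd k))))
    (mul_mem_weightSpace (signedPow_b_mem_weightSpace (-d)) (t_zpow_mem_weightSpace (-i)))

theorem haar_eq_zero_of_mem_weightSpace [CharZero k] {s : ℤ × ℤ × ℤ} (hs : s ≠ 0) {z : GLq22 k q}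
    (hz : z ∈ weightSpace k q s) : haar k q z = 0 := by
  by_contra hne
  have hchar (u v w : kˣ) : (w : k) ^ s.1 * v ^ s.2.1 * u ^ s.2.2 = 1 := by
    refine mul_right_cancel₀ hne ?_
    have h := haar_torus u v w z
    rw [hz u v w, Units.smul_def, map_smul] at h
    simpa using h
  let two : kˣ := Units.mk0 2 two_ne_zero
  refine hs (Prod.ext ?_ (Prod.ext ?_ ?_))
  · simpa [two, two_zpow_eq_one_iff] using hchar 1 1 two
  · simpa [two, two_zpow_eq_one_iff] using hchar 1 two 1
  · simpa [two, two_zpow_eq_one_iff] using hchar two 1 1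

theorem haar_aeval (f : k[X]) :
    haar k q (aeval ((gens k q).b * (gens k q).b') f) = jacksonIntegral (q ^ 2) f := by
  induction f using Polynomial.induction_on' with
  | add f g hf hg => rw [map_add, map_add, map_add, hf, hg]
  | monomial n c =>
    rw [aeval_monomial, ← Algebra.smul_def, map_smul, b_mul_b'_pow, haar_mon, if_pos (by simp),
      jacksonIntegral_monomial, smul_eq_mul, mul_comm]

end Weights

section Positivity

variable {q : ℝ} [NeZero (q : ℂ)] [StarRing (GLq22 ℂ (q : ℂ))] [StarModule ℂ (GLq22 ℂ (q : ℂ))]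

theorem haar_star_weightVector_mul_self_nonneg (h : (gens ℂ (q : ℂ)).IsUnitary) (s : ℤ × ℤ × ℤ)
    (f : ℂ[X]) :
    0 ≤ haar ℂ q
      (star ((gens ℂ (q : ℂ)).weightVector s f) * (gens ℂ (q : ℂ)).weightVector s f) := by
  have hq : q ≠ 0 := by exact_mod_cast NeZero.ne (q : ℂ)
  obtain ⟨S, hS, hpos⟩ := exists_isLadder (sq_pos_of_ne_zero hq)
  rw [h.star_weightVector_mul_self (NeZero.ne _), haar_aeval, neg_sq, ← Complex.ofReal_pow]
  exact hpos _ ((isNonnegOn_map_star_mul hS.nonneg f _).shift hS _)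

theorem haar_star_mul_self_nonneg (h : (gens ℂ (q : ℂ)).IsUnitary) (z : GLq22 ℂ (q : ℂ)) :
    0 ≤ haar ℂ q (star z * z) := by
  refine map_star_mul_self_nonneg_of_orthogonal
    (P := fun s => LinearMap.range ((gens ℂ (q : ℂ)).weightVector s)) ?_ ?_ ?_ z
  · exact top_le_iff.1 (monSpan_gens.ge.trans (gens ℂ (q : ℂ)).monSpan_le_iSup_range_weightVector)
  · rintro s s' hs _ ⟨f, rfl⟩ _ ⟨g, rfl⟩
    exact haar_eq_zero_of_mem_weightSpace (neg_add_eq_zero.not.2 hs)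
      (mul_mem_weightSpace (star_weightVector_mem_weightSpace h s f)
        (weightVector_mem_weightSpace s' g))
  · rintro s _ ⟨f, rfl⟩
    exact haar_star_weightVector_mul_self_nonneg h s f

end Positivity

end GLq22

/-- Let `q` be a nonzero real number.  There exists a positive Haar measure on
`U_q(2,-2)`: a linear map `μ : U_q(2,-2) → ℂ` with `μ(1) = 1`,
`(id ⊗ μ) ∘ α = u ∘ μ` for the coaction `α`, and `μ(z*z) ≥ 0` for all `z`,
where the star `sZ` is the *-structure of `U_q(2,-2)`. -/
theorem Uq22_positive_haar_measure (q : ℝ) (hq : q ≠ 0)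
    -- the *-structure of `U_q(2,-2)`
    (sZ : GLq22 ℂ (q : ℂ) → GLq22 ℂ (q : ℂ))
    (hsZadd : ∀ x y, sZ (x + y) = sZ x + sZ y)
    (hsZsmul : ∀ (c : ℂ) x, sZ (c • x) = (starRingEnd ℂ) c • sZ x)
    (hsZinv : ∀ x, sZ (sZ x) = x)
    (hsZmul : ∀ x y, sZ (x * y) = sZ y * sZ x)
    (hsZ11 : sZ (zM ℂ (q : ℂ) 0 0) = zM ℂ (q : ℂ) 1 1 * tauE ℂ (q : ℂ))
    (hsZ12 : sZ (zM ℂ (q : ℂ) 0 1) = (q : ℂ)⁻¹ • (zM ℂ (q : ℂ) 1 0 * tauE ℂ (q : ℂ)))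
    (hsZ21 : sZ (zM ℂ (q : ℂ) 1 0) = (q : ℂ) • (tauE ℂ (q : ℂ) * zM ℂ (q : ℂ) 0 1))
    (hsZ22 : sZ (zM ℂ (q : ℂ) 1 1) = tauE ℂ (q : ℂ) * zM ℂ (q : ℂ) 0 0)
    (hsZt : sZ (tauE ℂ (q : ℂ)) =
      zM ℂ (q : ℂ) 0 0 * zM ℂ (q : ℂ) 1 1 + (q : ℂ)⁻¹ • (zM ℂ (q : ℂ) 0 1 * zM ℂ (q : ℂ) 1 0))
    -- the coaction
    (α : GLq22 ℂ (q : ℂ) →ₐ[ℂ] GLq2 ℂ (q : ℂ) ⊗[ℂ] GLq22 ℂ (q : ℂ))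
    (hα : ∀ i j : Fin 2,
      α (zM ℂ (q : ℂ) i j) = ∑ l : Fin 2, xM ℂ (q : ℂ) i l ⊗ₜ[ℂ] zM ℂ (q : ℂ) l j)
    (hατ : α (tauE ℂ (q : ℂ)) = tE ℂ (q : ℂ) ⊗ₜ[ℂ] tauE ℂ (q : ℂ)) :
    ∃ μ : GLq22 ℂ (q : ℂ) →ₗ[ℂ] ℂ,
      μ 1 = 1 ∧
      (∀ z : GLq22 ℂ (q : ℂ),
        (TensorProduct.rid ℂ (GLq2 ℂ (q : ℂ)))
            (TensorProduct.map (LinearMap.id (M := GLq2 ℂ (q : ℂ))) μ (α z)) =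
          algebraMap ℂ (GLq2 ℂ (q : ℂ)) (μ z)) ∧
      ∀ z : GLq22 ℂ (q : ℂ), 0 ≤ μ (sZ z * z) := by
  have : NeZero (q : ℂ) := ⟨Complex.ofReal_ne_zero.2 hq⟩
  have hqInt (n : ℕ) : qInt ((q : ℂ) ^ 2) (n + 1) ≠ 0 :=
    (qInt_succ_pos (by exact_mod_cast sq_nonneg q) n).ne'
  let _ : StarRing (GLq22 ℂ (q : ℂ)) :=
    { star := sZ, star_involutive := hsZinv, star_mul := hsZmul, star_add := hsZadd }
  have : StarModule ℂ (GLq22 ℂ (q : ℂ)) := ⟨hsZsmul⟩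
  have hunitary : (GLq22.gens ℂ (q : ℂ)).IsUnitary := ⟨hsZ11, hsZ12, hsZt⟩
  refine ⟨GLq22.haar ℂ q, GLq22.haar_one, fun z => ?_, GLq22.haar_star_mul_self_nonneg hunitary⟩
  exact Submodule.eq_top_iff'.1 (GLq22.invarianceLocus_haar_eq_top hqInt hα hατ) z

end
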